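/- Let either d ≤ 2s and p ∈ [2,∞), or d > 2s and p ∈ [2, 2d/(d−2s)]. Suppose ρ satisfies c|x|^{−γ_0} ≤ ρ ≤ C|x|^{−γ_0} on B_1 and c|x|^{−γ} ≤ ρ ≤ C|x|^{−γ} on B_1^c with γ_0 ∈ [0,d) and γ ∈ [0, d − (p/2)(d−2s)]. Then X_{p,s,ρ} embeds continuously into the homogeneous Sobolev space Ḣ^s(ℝ^d), and the inequality (C_{d,s}/2) ∬_{ℝ^d×ℝ^d} (v(x)−v(y))^2/|x−y|^{d+2s} dx dy ≤ ∫_{ℝ^d} v(x) (−Δ)^s v(x) dx holds for every v ∈ X_{p,s,ρ}. -/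

import Mathlib

open MeasureTheory Filter Metric Set
open scoped Topology ENNReal

noncomputable section

abbrev Ed (d : ℕ) := EuclideanSpace ℝ (Fin d)

/-- Truncated (away from the singularity) fractional-Laplacian integral. -/
noncomputable def fracLapTrunc (d : ℕ) (s : ℝ) (f : Ed d → ℝ) (x : Ed d) (ε : ℝ) : ℝ :=
  ∫ y in {y : Ed d | ε ≤ dist x y}, (f x - f y) / dist x y ^ ((d : ℝ) + 2 * s)

/-- Fractional Laplacian, as a principal value (limit of truncated integrals),
with normalization constant `Cds`. -/
noncomputable def fracLap (d : ℕ) (s Cds : ℝ) (f : Ed d → ℝ) (x : Ed d) : ℝ :=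
  Cds * limUnder (𝓝[>] (0:ℝ)) (fracLapTrunc d s f x)

/-- `V` is the distributional fractional Laplacian of `v`. -/
def IsDistFracLap (d : ℕ) (s Cds : ℝ) (v V : Ed d → ℝ) : Prop :=
  ∀ φ : Ed d → ℝ, ContDiff ℝ (⊤ : ℕ∞) φ → HasCompactSupport φ →
    ∫ x, v x * fracLap d s Cds φ x = ∫ x, V x * φ x

/-- The nonlocal quantity `l_{p,s}(f)(x) = ∫ |f x - f y|^p / |x-y|^{d+ps} dy`. -/
noncomputable def lps (d : ℕ) (p s : ℝ) (f : Ed d → ℝ) (x : Ed d) : ℝ :=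
  ∫ y, |f x - f y| ^ p / dist x y ^ ((d : ℝ) + p * s)

/-- A weight comparable to `|x|^{-γ₀}` on the unit ball and to `|x|^{-γ}` outside. -/
def TwoPowerWeight (d : ℕ) (ρ : Ed d → ℝ) (c C γ₀ γ : ℝ) : Prop :=
  0 < c ∧ c < C ∧
  (∀ᵐ x : Ed d, ‖x‖ ≤ 1 → c * ‖x‖ ^ (-γ₀) ≤ ρ x ∧ ρ x ≤ C * ‖x‖ ^ (-γ₀)) ∧
  (∀ᵐ x : Ed d, 1 < ‖x‖ → c * ‖x‖ ^ (-γ) ≤ ρ x ∧ ρ x ≤ C * ‖x‖ ^ (-γ))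

/-- Standard mollification `f_ε = η_ε ∗ f` with `η_ε(x) = ε^{-d} η(x/ε)`. -/
noncomputable def mollify (d : ℕ) (η : Ed d → ℝ) (ε : ℝ) (f : Ed d → ℝ) (x : Ed d) : ℝ :=
  ∫ y, (ε ^ (-(d:ℝ)) * η (ε⁻¹ • (x - y))) * f y

/-- A smooth nonnegative probability mollifier supported in the unit ball. -/
def IsMollifier (d : ℕ) (η : Ed d → ℝ) : Prop :=
  ContDiff ℝ (⊤ : ℕ∞) η ∧ (∀ x, 0 ≤ η x) ∧ tsupport η ⊆ closedBall (0 : Ed d) 1 ∧ ∫ x, η x = 1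

/-- Membership in the weighted Lebesgue space `L^p(ρ dx)`. -/
def MemWLp (d : ℕ) (p : ℝ) (ρ f : Ed d → ℝ) : Prop :=
  AEStronglyMeasurable f (volume : Measure (Ed d)) ∧
    Integrable (fun x => |f x| ^ p * ρ x)

/-- `v ∈ X_{p,s,ρ}` with distributional fractional Laplacian `V`. -/
def MemX (d : ℕ) (s Cds p : ℝ) (ρ : Ed d → ℝ) (v V : Ed d → ℝ) : Prop :=
  MemWLp d p ρ v ∧ IsDistFracLap d s Cds v V ∧
    MemWLp d (p / (p - 1)) (fun x => ρ x ^ (-(p / (p - 1) - 1))) V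

/-- Weighted `L^p` norm. -/
noncomputable def wNorm (d : ℕ) (p : ℝ) (ρ f : Ed d → ℝ) : ℝ :=
  (∫ x, |f x| ^ p * ρ x) ^ (1 / p)

/-- Norm of the space `X_{p,s,ρ}` (on the pair `(v, (−Δ)^s v)`). -/
noncomputable def xNorm (d : ℕ) (p : ℝ) (ρ : Ed d → ℝ) (v V : Ed d → ℝ) : ℝ :=
  Real.sqrt ((wNorm d p ρ v) ^ 2 +
    (wNorm d (p / (p - 1)) (fun x => ρ x ^ (-(p / (p - 1) - 1))) V) ^ 2)

/-- Riesz potential `I_{d,s} ∗ f` with kernel constant `κ`. -/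
noncomputable def riesz (d : ℕ) (s κ : ℝ) (f : Ed d → ℝ) (x : Ed d) : ℝ :=
  ∫ y, κ * ‖x - y‖ ^ (-((d:ℝ) - 2 * s)) * f y

end

namespace FL

/-- the kernel -/
noncomputable def Kk (d : ℕ) (s : ℝ) (h : Ed d) : ℝ := (‖h‖ ^ ((d:ℝ) + 2 * s))⁻¹

/-- second difference -/
def DD {d : ℕ} (φ : Ed d → ℝ) (h x : Ed d) : ℝ := 2 * φ x - φ (x + h) - φ (x - h)

theorem Kk_nonneg {d : ℕ} {s : ℝ} (h : Ed d) : 0 ≤ Kk d s h := by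
  unfold Kk; positivity

theorem Kk_meas {d : ℕ} {s : ℝ} : Measurable (Kk d s) := by
  unfold Kk; fun_prop

theorem radial_integrable {d : ℕ} (hd : 1 ≤ d) {s : ℝ} (hs : s ∈ Set.Ioo (0:ℝ) 1) :
    Integrable (fun h : Ed d => min 1 (‖h‖ ^ 2) * Kk d s h) := by
  have : Nontrivial (Ed d) := by
    have : Nonempty (Fin d) := ⟨⟨0, hd⟩⟩
    infer_instance
  have key := (integrable_fun_norm_addHaar (volume : Measure (Ed d))
    (f := fun r : ℝ => min 1 (r ^ 2) * (r ^ ((d:ℝ) + 2 * s))⁻¹)).2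
  apply key
  have hpow : ∀ r : ℝ, 0 < r → r ^ (Module.finrank ℝ (Ed d) - 1) * (r ^ ((d:ℝ) + 2 * s))⁻¹
      = r ^ (-1 - 2 * s) := by
    intro r hr
    rw [finrank_euclideanSpace_fin, ← Real.rpow_natCast, ← Real.rpow_neg hr.le,
      ← Real.rpow_add hr]
    congr 1
    push_cast [Nat.cast_sub hd]
    ring
  rw [← Ioc_union_Ioi_eq_Ioi (zero_le_one (α := ℝ))]
  apply IntegrableOn.union
  · have h1 : IntegrableOn (fun r : ℝ => r ^ (1 - 2 * s)) (Ioc 0 1) := by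
      have := (intervalIntegral.intervalIntegrable_rpow' (a := 0) (b := 1)
        (r := 1 - 2 * s) (by linarith [hs.2]))
      rwa [intervalIntegrable_iff_integrableOn_Ioc_of_le zero_le_one] at this
    refine h1.congr_fun ?_ measurableSet_Ioc
    intro r hr
    have h2 : min 1 (r ^ 2) = r ^ 2 := min_eq_right (by nlinarith [hr.1, hr.2])
    simp only [h2, smul_eq_mul]
    rw [mul_left_comm, hpow r hr.1, ← Real.rpow_natCast, ← Real.rpow_add hr.1]
    congr 1; push_cast; ring
  · have h1 : IntegrableOn (fun r : ℝ => r ^ (-1 - 2 * s)) (Ioi 1) :=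
      integrableOn_Ioi_rpow_of_lt (by linarith [hs.1]) one_pos
    refine h1.congr_fun ?_ measurableSet_Ioi
    intro r hr
    have hr' : (1:ℝ) < r := hr
    have h2 : min 1 (r ^ 2) = 1 := min_eq_left (by nlinarith)
    simp only [h2, smul_eq_mul, one_mul]
    rw [hpow r (by linarith)]

theorem pow_integrable_ball {d : ℕ} (hd : 1 ≤ d) {a : ℝ} (ha : a < d) (M : ℝ) :
    IntegrableOn (fun h : Ed d => ‖h‖ ^ (-a)) (closedBall 0 M) := by
  have : Nontrivial (Ed d) := by
    have : Nonempty (Fin d) := ⟨⟨0, hd⟩⟩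
    infer_instance
  have key := (integrable_fun_norm_addHaar (volume : Measure (Ed d))
    (f := fun r : ℝ => (Iic M).indicator (fun r => r ^ (-a)) r)).2
  rw [← integrable_indicator_iff measurableSet_closedBall]
  have e : (closedBall (0 : Ed d) M).indicator (fun h : Ed d => ‖h‖ ^ (-a))
      = fun x : Ed d => (Iic M).indicator (fun r => r ^ (-a)) ‖x‖ := by
    ext x; simp [indicator]
  rw [e]
  apply key
  have h1 : IntegrableOn (fun r : ℝ => r ^ ((d:ℝ) - 1 - a)) (Ioc 0 (max M 0)) := by
    have := (intervalIntegral.intervalIntegrable_rpow' (a := 0) (b := max M 0)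
        (r := (d:ℝ) - 1 - a) (by linarith))
    rwa [intervalIntegrable_iff_integrableOn_Ioc_of_le (le_max_right _ _)] at this
  have h2 := (integrable_indicator_iff measurableSet_Ioc).2 h1
  refine (h2.integrableOn (s := Ioi 0)).congr_fun ?_ measurableSet_Ioi
  intro r hr
  have hr' : (0:ℝ) < r := hr
  by_cases hM : r ≤ M
  · have : r ∈ Ioc 0 (max M 0) := ⟨hr', le_max_of_le_left hM⟩
    simp only [indicator_of_mem this, indicator_of_mem (show r ∈ Iic M from hM), smul_eq_mul]
    rw [finrank_euclideanSpace_fin, ← Real.rpow_natCast, ← Real.rpow_add hr']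
    congr 1
    push_cast [Nat.cast_sub hd]
    ring
  · have : r ∉ Ioc 0 (max M 0) := by
      rintro ⟨_, h⟩
      rcases le_max_iff.1 h with h | h <;> linarith
    simp [indicator_of_notMem this, indicator_of_notMem (show r ∉ Iic M from hM)]

theorem DD_bound {d : ℕ} {φ : Ed d → ℝ} (hφ : ContDiff ℝ (⊤ : ℕ∞) φ) (hc : HasCompactSupport φ) :
    ∃ B, 0 ≤ B ∧ ∀ h x, |DD φ h x| ≤ B * min 1 (‖h‖ ^ 2) := by
  obtain ⟨M, hM⟩ := hc.exists_bound_of_continuous hφ.continuous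
  have hM0 : 0 ≤ M := (norm_nonneg _).trans (hM 0)
  obtain ⟨L, hL⟩ := ContDiff.lipschitzWith_of_hasCompactSupport (𝕂 := ℝ) (n := 1)
    (hc.fderiv (𝕜 := ℝ)) (hφ.fderiv_right (by norm_cast)) one_ne_zero
  have hdiff : Differentiable ℝ φ := hφ.differentiable (by simp)
  refine ⟨4 * M + 2 * L, by positivity, fun h x => ?_⟩
  have h1 : |DD φ h x| ≤ 4 * M := by
    have a := hM x; have b := hM (x + h); have c := hM (x - h)
    rw [Real.norm_eq_abs, abs_le] at a b c
    unfold DD; rw [abs_le]; constructor <;> linarith [a.1, a.2, b.1, b.2, c.1, c.2]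
  have h2 : |DD φ h x| ≤ 2 * L * ‖h‖ ^ 2 := by
    let g : ℝ → ℝ := fun t => φ (x + t • h) + φ (x - t • h)
    have hg : ∀ t, HasDerivAt g (fderiv ℝ φ (x + t • h) h - fderiv ℝ φ (x - t • h) h) t := by
      intro t
      have e1 : HasDerivAt (fun t : ℝ => x + t • h) h t := by
        simpa using ((hasDerivAt_id t).smul_const h).const_add x
      have e2 : HasDerivAt (fun t : ℝ => x - t • h) (-h) t := by
        simpa using ((hasDerivAt_id t).smul_const h).const_sub x
      have f1 := (hdiff (x + t • h)).hasFDerivAt.comp_hasDerivAt t e1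
      have f2 := (hdiff (x - t • h)).hasFDerivAt.comp_hasDerivAt t e2
      have := f1.add f2
      simp only [map_neg] at this
      rw [sub_eq_add_neg]
      exact this
    have hb : ∀ t ∈ Icc (0:ℝ) 1, ‖fderiv ℝ φ (x + t • h) h - fderiv ℝ φ (x - t • h) h‖
        ≤ 2 * L * ‖h‖ ^ 2 := by
      intro t ht
      rw [← sub_apply]
      refine (ContinuousLinearMap.le_opNorm _ _).trans ?_
      have := hL.dist_le_mul (x + t • h) (x - t • h)
      rw [dist_eq_norm, dist_eq_norm] at this
      have e : (x + t • h) - (x - t • h) = (2 * t) • h := by rw [two_mul, add_smul]; abel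
      rw [e, norm_smul, Real.norm_eq_abs, abs_of_nonneg (by linarith [ht.1])] at this
      have h3 : (L:ℝ) * (2 * t * ‖h‖) ≤ L * (2 * ‖h‖) := by
        gcongr
        nlinarith [ht.2, norm_nonneg h]
      calc _ ≤ (L * (2 * ‖h‖)) * ‖h‖ := by gcongr; exact this.trans h3
        _ = _ := by ring
    have := (convex_Icc (0:ℝ) 1).norm_image_sub_le_of_norm_hasDerivWithin_le
      (fun t _ => (hg t).hasDerivWithinAt) hb (left_mem_Icc.2 zero_le_one)
      (right_mem_Icc.2 zero_le_one)
    have e : g 1 - g 0 = - DD φ h x := by simp [g, DD]; ring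
    rw [e, norm_neg, Real.norm_eq_abs] at this
    simpa using this
  rcases le_total 1 (‖h‖ ^ 2) with h3 | h3
  · rw [min_eq_left h3]; nlinarith [L.2]
  · rw [min_eq_right h3]
    nlinarith [mul_nonneg hM0 (sq_nonneg ‖h‖)]

theorem DD_cont {d : ℕ} {φ : Ed d → ℝ} (hφ : Continuous φ) :
    Continuous (fun z : Ed d × Ed d => DD φ z.1 z.2) := by
  unfold DD; fun_prop

theorem DDK_integrable {d : ℕ} (hd : 1 ≤ d) {s : ℝ} (hs : s ∈ Set.Ioo (0:ℝ) 1) {φ : Ed d → ℝ}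
    (hφ : ContDiff ℝ (⊤ : ℕ∞) φ) (hc : HasCompactSupport φ) (x : Ed d) :
    Integrable (fun h => DD φ h x * Kk d s h) := by
  obtain ⟨B, hB, hb⟩ := DD_bound hφ hc
  refine ((radial_integrable hd hs).const_mul B).mono' ?_ ?_
  · have h1 : Continuous (fun h : Ed d => DD φ h x) := by
      have := hφ.continuous
      unfold DD; fun_prop
    exact (h1.measurable.mul Kk_meas).aestronglyMeasurable
  · refine Eventually.of_forall fun h => ?_
    rw [norm_mul, Real.norm_eq_abs, Real.norm_eq_abs, abs_of_nonneg (Kk_nonneg h), ← mul_assoc]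
    exact mul_le_mul_of_nonneg_right (hb h x) (Kk_nonneg h)

set_option maxHeartbeats 400000 in
theorem A_bound {d : ℕ} (hd : 1 ≤ d) {s : ℝ} (hs : s ∈ Set.Ioo (0:ℝ) 1) {φ : Ed d → ℝ}
    (hφ : ContDiff ℝ (⊤ : ℕ∞) φ) (hc : HasCompactSupport φ) :
    ∃ B, 0 ≤ B ∧ ∀ x, ∫ h, |DD φ h x| * Kk d s h ≤ B * (1 + ‖x‖) ^ (-((d:ℝ) + 2 * s)) := by
  have hs0 := hs.1
  have hq : 0 < (d:ℝ) + 2 * s := by positivity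
  obtain ⟨B, hB, hb⟩ := DD_bound hφ hc
  obtain ⟨r, hr⟩ := hc.isCompact.isBounded.subset_closedBall (0 : Ed d)
  obtain ⟨r, hr1, hr⟩ : ∃ r : ℝ, 1 ≤ r ∧ tsupport φ ⊆ closedBall 0 r :=
    ⟨max r 1, le_max_right _ _, hr.trans (closedBall_subset_closedBall (le_max_left _ _))⟩
  have hz : ∀ y : Ed d, r < ‖y‖ → φ y = 0 := by
    intro y hy
    by_contra h
    have := hr (subset_tsupport _ h)
    rw [mem_closedBall_zero_iff] at this
    linarith
  have hi : ∀ x, Integrable (fun h => |DD φ h x| * Kk d s h) := fun x => by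
    refine (DDK_integrable hd hs hφ hc x).norm.congr (Eventually.of_forall fun h => ?_)
    simp only [norm_mul, Real.norm_eq_abs, abs_of_nonneg (Kk_nonneg h)]
  have hint : Integrable φ := hφ.continuous.integrable_of_hasCompactSupport hc
  set J := ∫ h : Ed d, min 1 (‖h‖ ^ 2) * Kk d s h with hJ
  have hJ0 : 0 ≤ J := integral_nonneg fun h => mul_nonneg (by positivity) (Kk_nonneg h)
  set N := ∫ y, |φ y| with hN
  have hN0 : 0 ≤ N := integral_nonneg fun h => abs_nonneg _
  refine ⟨B * J * (1 + 2 * r) ^ ((d:ℝ) + 2 * s) + 2 * N * 4 ^ ((d:ℝ) + 2 * s), by positivity,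
    fun x => ?_⟩
  rcases le_or_gt ‖x‖ (2 * r) with hx | hx
  · have h1 : ∫ h, |DD φ h x| * Kk d s h ≤ B * J := by
      rw [hJ, ← integral_const_mul]
      refine integral_mono (hi x) ((radial_integrable hd hs).const_mul B) fun h => ?_
      simp only
      rw [← mul_assoc]
      exact mul_le_mul_of_nonneg_right (hb h x) (Kk_nonneg h)
    refine h1.trans ?_
    have h2 : 1 ≤ (1 + 2 * r) ^ ((d:ℝ) + 2 * s) * (1 + ‖x‖) ^ (-((d:ℝ) + 2 * s)) := by
      rw [Real.rpow_neg (by positivity), ← div_eq_mul_inv, le_div_iff₀ (by positivity), one_mul]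
      gcongr
    have h3 : 0 ≤ 2 * N * 4 ^ ((d:ℝ) + 2 * s) * (1 + ‖x‖) ^ (-((d:ℝ) + 2 * s)) := by positivity
    have h4 : 0 ≤ B * J := by positivity
    nlinarith
  · have hx0 : 0 < ‖x‖ := by linarith
    have hφx : φ x = 0 := hz x (by linarith)
    have key : ∀ h, |DD φ h x| * Kk d s h ≤ (|φ (x + h)| + |φ (x - h)|) *
        (4 ^ ((d:ℝ) + 2 * s) * (1 + ‖x‖) ^ (-((d:ℝ) + 2 * s))) := by
      intro h
      have e1 : |DD φ h x| ≤ |φ (x + h)| + |φ (x - h)| := by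
        unfold DD; rw [hφx]
        calc _ = |-(φ (x + h)) + -φ (x - h)| := by ring_nf
          _ ≤ _ := by
            refine (abs_add_le _ _).trans ?_
            rw [abs_neg, abs_neg]
      by_cases hh : r < ‖x + h‖ ∧ r < ‖x - h‖
      · rw [hz _ hh.1, hz _ hh.2] at e1 ⊢
        have : |DD φ h x| = 0 := le_antisymm (by simpa using e1) (abs_nonneg _)
        simp [this]
      · have hh' : ‖x‖ ≤ r + ‖h‖ := by
          rw [not_and_or, not_lt, not_lt] at hh
          rcases hh with hh | hh
          · have := norm_sub_norm_le x (-h)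
            rw [sub_neg_eq_add, norm_neg] at this; linarith
          · have := norm_sub_norm_le x h; linarith
        have hh2 : 1 + ‖x‖ ≤ 4 * ‖h‖ := by linarith
        have hh3 : Kk d s h ≤ 4 ^ ((d:ℝ) + 2 * s) * (1 + ‖x‖) ^ (-((d:ℝ) + 2 * s)) := by
          have hpos : 0 < ‖h‖ := by linarith
          unfold Kk
          rw [Real.rpow_neg (by positivity), ← div_eq_mul_inv, inv_le_comm₀ (by positivity) (by positivity), inv_div, div_le_iff₀ (by positivity)]
          rw [← Real.mul_rpow (by positivity) (by positivity)]
          exact Real.rpow_le_rpow (by positivity) (by linarith) hq.le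
        exact mul_le_mul e1 hh3 (Kk_nonneg h) (by positivity)
    have i1 : Integrable (fun h => |φ (x + h)|) := (hint.comp_add_left x).abs
    have i2 : Integrable (fun h => |φ (x - h)|) := (hint.comp_sub_left x).abs
    refine (integral_mono (hi x) ((i1.add i2).mul_const _) key).trans ?_
    rw [integral_mul_const]
    have e : ∫ h, ((fun h => |φ (x + h)|) + fun h => |φ (x - h)|) h = 2 * N := by
      simp only [Pi.add_apply]
      rw [integral_add i1 i2, integral_add_left_eq_self (fun y => |φ y|) x,
        integral_sub_left_eq_self (fun y => |φ y|) volume x, two_mul]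
    rw [e]
    have h5 : 0 ≤ B * J * (1 + 2 * r) ^ ((d:ℝ) + 2 * s) * (1 + ‖x‖) ^ (-((d:ℝ) + 2 * s)) :=
      mul_nonneg (mul_nonneg (mul_nonneg hB hJ0) (Real.rpow_nonneg (by linarith) _))
        (Real.rpow_nonneg (by positivity) _)
    rw [add_mul, mul_assoc (2 * N)]
    exact le_add_of_nonneg_left h5

end FL

namespace FL

theorem Kk_zero {d : ℕ} {s : ℝ} (hs : s ∈ Set.Ioo (0:ℝ) 1) : Kk d s 0 = 0 := by
  have hs0 := hs.1
  have hq : 0 < (d:ℝ) + 2 * s := by positivity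
  unfold Kk
  rw [norm_zero, Real.zero_rpow hq.ne', inv_zero]

theorem Kk_neg {d : ℕ} {s : ℝ} (h : Ed d) : Kk d s (-h) = Kk d s h := by
  unfold Kk; rw [norm_neg]

theorem trunc_eq {d : ℕ} (hd : 1 ≤ d) {s : ℝ} (hs : s ∈ Set.Ioo (0:ℝ) 1) {φ : Ed d → ℝ}
    (hφ : ContDiff ℝ (⊤ : ℕ∞) φ) (hc : HasCompactSupport φ) (x : Ed d) {ε : ℝ} (hε : 0 < ε) :
    fracLapTrunc d s φ x ε =
      1 / 2 * ∫ h, {h : Ed d | ε ≤ ‖h‖}.indicator (fun h => DD φ h x * Kk d s h) h := by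
  have hcont := hφ.continuous
  obtain ⟨M, hM⟩ := hc.exists_bound_of_continuous hφ.continuous
  have hM0 : 0 ≤ M := (norm_nonneg _).trans (hM 0)
  have hms : MeasurableSet {h : Ed d | ε ≤ ‖h‖} := measurableSet_le measurable_const measurable_norm
  set G : Ed d → ℝ := {h : Ed d | ε ≤ ‖h‖}.indicator (fun h => (φ x - φ (x + h)) * Kk d s h) with hG
  have e1 : fracLapTrunc d s φ x ε = ∫ h, G h := by
    unfold fracLapTrunc
    have hms' : MeasurableSet {y : Ed d | ε ≤ dist x y} :=
      measurableSet_le measurable_const (by fun_prop)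
    rw [← integral_indicator hms', ← integral_add_left_eq_self _ x]
    congr 1; ext h
    simp only [hG, indicator, mem_ofPred_eq, dist_self_add_right, Kk, div_eq_mul_inv]
  have hGi : Integrable G := by
    refine ((radial_integrable hd hs).const_mul (2 * M * (min 1 (ε ^ 2))⁻¹)).mono' ?_ ?_
    · refine Measurable.aestronglyMeasurable (Measurable.indicator ?_ hms)
      exact (Continuous.measurable (by fun_prop)).mul Kk_meas
    · refine Eventually.of_forall fun h => ?_
      have hmin : 0 < min 1 (ε ^ 2) := by positivity
      by_cases hh : ε ≤ ‖h‖
      · rw [hG, indicator_of_mem (show h ∈ {h : Ed d | ε ≤ ‖h‖} from hh), norm_mul,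
          Real.norm_eq_abs (Kk d s h), abs_of_nonneg (Kk_nonneg h), ← mul_assoc]
        refine mul_le_mul_of_nonneg_right ?_ (Kk_nonneg h)
        have h1 : ‖φ x - φ (x + h)‖ ≤ 2 * M := by
          refine (norm_sub_le _ _).trans ?_
          linarith [hM x, hM (x + h)]
        refine h1.trans ?_
        rw [mul_assoc]
        refine le_mul_of_one_le_right (by positivity) ?_
        rw [inv_mul_eq_div, le_div_iff₀ hmin, one_mul]
        gcongr
      · rw [hG, indicator_of_notMem (show h ∉ {h : Ed d | ε ≤ ‖h‖} from hh), norm_zero]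
        have := Kk_nonneg (s := s) h
        positivity
  have e2 : ∫ h, G (-h) = ∫ h, G h := integral_neg_eq_self G volume
  have e3 : ∫ h, (G h + G (-h)) = 2 * ∫ h, G h := by
    rw [integral_add hGi hGi.comp_neg, e2, two_mul]
  have e4 : (fun h => {h : Ed d | ε ≤ ‖h‖}.indicator (fun h => DD φ h x * Kk d s h) h)
      = fun h => G h + G (-h) := by
    ext h
    simp only [hG, indicator, mem_ofPred_eq, norm_neg, Kk_neg]
    split_ifs
    · unfold DD; rw [← sub_eq_add_neg x h]; ring
    · simp
  rw [e4, e3, e1]; ring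

theorem fracLap_eq {d : ℕ} (hd : 1 ≤ d) {s : ℝ} (hs : s ∈ Set.Ioo (0:ℝ) 1) (Cds : ℝ) {φ : Ed d → ℝ}
    (hφ : ContDiff ℝ (⊤ : ℕ∞) φ) (hc : HasCompactSupport φ) (x : Ed d) :
    fracLap d s Cds φ x = Cds / 2 * ∫ h, DD φ h x * Kk d s h := by
  have hcont := hφ.continuous
  have key : Tendsto (fracLapTrunc d s φ x) (𝓝[>] (0:ℝ))
      (𝓝 (1 / 2 * ∫ h, DD φ h x * Kk d s h)) := by
    have h1 : Tendsto (fun ε : ℝ => 1 / 2 *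
        ∫ h, {h : Ed d | ε ≤ ‖h‖}.indicator (fun h => DD φ h x * Kk d s h) h) (𝓝[>] (0:ℝ))
        (𝓝 (1 / 2 * ∫ h, DD φ h x * Kk d s h)) := by
      refine Tendsto.const_mul _ ?_
      have hi := DDK_integrable hd hs hφ hc x
      refine tendsto_integral_filter_of_dominated_convergence (fun h => ‖DD φ h x * Kk d s h‖)
        ?_ ?_ hi.norm ?_
      · exact Eventually.of_forall fun ε => hi.1.indicator
          (measurableSet_le measurable_const measurable_norm)
      · exact Eventually.of_forall fun ε => Eventually.of_forall fun h => norm_indicator_le_norm_self _ _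
      · refine Eventually.of_forall fun h => ?_
        by_cases hh : h = 0
        · subst hh
          simp [indicator, Kk_zero hs]
        · refine tendsto_const_nhds.congr' ?_
          have : ∀ᶠ ε in 𝓝[>] (0:ℝ), ε < ‖h‖ :=
            nhdsWithin_le_nhds (eventually_lt_nhds (norm_pos_iff.2 hh))
          filter_upwards [this] with ε hε
          rw [indicator_of_mem (show h ∈ {h : Ed d | ε ≤ ‖h‖} from hε.le)]
    refine h1.congr' ?_
    filter_upwards [self_mem_nhdsWithin] with ε hε
    exact (trunc_eq hd hs hφ hc x hε).symm
  unfold fracLap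
  rw [key.limUnder_eq]; ring

theorem pair_integrable {d : ℕ} (hd : 1 ≤ d) {s : ℝ} (hs : s ∈ Set.Ioo (0:ℝ) 1) {φ : Ed d → ℝ}
    (hφ : ContDiff ℝ (⊤ : ℕ∞) φ) (hc : HasCompactSupport φ) {f : Ed d → ℝ} (hf : Measurable f)
    (hfi : Integrable (fun x => |f x| * (1 + ‖x‖) ^ (-((d:ℝ) + 2 * s)))) :
    Integrable (fun z : Ed d × Ed d => f z.1 * (DD φ z.2 z.1 * Kk d s z.2))
      ((volume : Measure (Ed d)).prod volume) := by
  obtain ⟨B, hB, hb⟩ := A_bound hd hs hφ hc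
  have hDm : Measurable (fun z : Ed d × Ed d => DD φ z.2 z.1) :=
    ((DD_cont hφ.continuous).comp continuous_swap).measurable
  have hm : Measurable (fun z : Ed d × Ed d => f z.1 * (DD φ z.2 z.1 * Kk d s z.2)) :=
    (hf.comp measurable_fst).mul (hDm.mul (Kk_meas.comp measurable_snd))
  have hn : ∀ x h, ‖f x * (DD φ h x * Kk d s h)‖ = |f x| * (|DD φ h x| * Kk d s h) := fun x h => by
    rw [norm_mul, norm_mul, Real.norm_eq_abs, Real.norm_eq_abs, Real.norm_eq_abs,
      abs_of_nonneg (Kk_nonneg h)]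
  rw [integrable_prod_iff hm.aestronglyMeasurable]
  refine ⟨Eventually.of_forall fun x => (DDK_integrable hd hs hφ hc x).const_mul (f x), ?_⟩
  refine (hfi.const_mul B).mono' ?_ ?_
  · exact (hm.norm.stronglyMeasurable.integral_prod_right').aestronglyMeasurable
  · refine Eventually.of_forall fun x => ?_
    rw [Real.norm_of_nonneg (integral_nonneg fun h => norm_nonneg _)]
    simp only [hn]
    rw [integral_const_mul, mul_left_comm]
    exact mul_le_mul_of_nonneg_left (hb x) (abs_nonneg _)

theorem pair_eq {d : ℕ} (hd : 1 ≤ d) {s : ℝ} (hs : s ∈ Set.Ioo (0:ℝ) 1) (Cds : ℝ) {φ : Ed d → ℝ}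
    (hφ : ContDiff ℝ (⊤ : ℕ∞) φ) (hc : HasCompactSupport φ) {f : Ed d → ℝ} (hf : Measurable f)
    (hfi : Integrable (fun x => |f x| * (1 + ‖x‖) ^ (-((d:ℝ) + 2 * s)))) :
    Integrable (fun h => Kk d s h * ∫ x, f x * DD φ h x) ∧
    ∫ x, f x * fracLap d s Cds φ x = Cds / 2 * ∫ h, Kk d s h * ∫ x, f x * DD φ h x := by
  have hi := pair_integrable hd hs hφ hc hf hfi
  have e : ∀ h, ∫ x, f x * (DD φ h x * Kk d s h) = Kk d s h * ∫ x, f x * DD φ h x := fun h => by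
    rw [← integral_const_mul]; congr 1; ext x; ring
  constructor
  · have := hi.integral_prod_right
    simpa only [e] using this
  · have h1 : ∫ x, f x * fracLap d s Cds φ x
        = ∫ x, Cds / 2 * ∫ h, f x * (DD φ h x * Kk d s h) := by
      congr 1; ext x
      rw [fracLap_eq hd hs Cds hφ hc, integral_const_mul]; ring
    rw [h1, integral_const_mul]
    congr 1
    rw [integral_integral_swap hi]
    simp only [e]

theorem A_scale {d : ℕ} (hd : 1 ≤ d) {s : ℝ} (hs : s ∈ Set.Ioo (0:ℝ) 1) {φ : Ed d → ℝ}
    (hφ : ContDiff ℝ (⊤ : ℕ∞) φ) (hc : HasCompactSupport φ) :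
    ∃ B, 0 ≤ B ∧ ∀ R : ℝ, 1 ≤ R → ∀ x, ∫ h, |DD (fun y => φ (R⁻¹ • y)) h x| * Kk d s h
      ≤ B * (R ^ d * (R + ‖x‖) ^ (-((d:ℝ) + 2 * s))) := by
  obtain ⟨B, hB, hb⟩ := A_bound hd hs hφ hc
  refine ⟨B, hB, fun R hR x => ?_⟩
  have hR0 : 0 < R := by linarith
  have e1 : ∀ h, |DD (fun y => φ (R⁻¹ • y)) h x| * Kk d s h
      = (fun h => R ^ (-((d:ℝ) + 2 * s)) * (|DD φ h (R⁻¹ • x)| * Kk d s h)) (R⁻¹ • h) := by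
    intro h
    have : Kk d s h = R ^ (-((d:ℝ) + 2 * s)) * Kk d s (R⁻¹ • h) := by
      unfold Kk
      rw [norm_smul, Real.norm_of_nonneg (by positivity), Real.mul_rpow (by positivity) (by positivity),
        Real.inv_rpow hR0.le, Real.rpow_neg hR0.le]
      field_simp
    rw [this]
    simp only [DD, smul_add, smul_sub]; ring
  rw [integral_congr_ae (Eventually.of_forall e1)]
  rw [Measure.integral_comp_smul volume
    (fun h => R ^ (-((d:ℝ) + 2 * s)) * (|DD φ h (R⁻¹ • x)| * Kk d s h)) R⁻¹, integral_const_mul, finrank_euclideanSpace_fin, smul_eq_mul,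
    inv_pow, inv_inv, abs_of_nonneg (by positivity)]
  have h2 : (1 + ‖R⁻¹ • x‖) ^ (-((d:ℝ) + 2 * s)) * R ^ (-((d:ℝ) + 2 * s))
      = (R + ‖x‖) ^ (-((d:ℝ) + 2 * s)) := by
    rw [← Real.mul_rpow (by positivity) hR0.le, norm_smul, Real.norm_of_nonneg (by positivity)]
    congr 1; field_simp
  calc _ ≤ R ^ d * (R ^ (-((d:ℝ) + 2 * s)) * (B * (1 + ‖R⁻¹ • x‖) ^ (-((d:ℝ) + 2 * s)))) := by
        gcongr; exact hb _
    _ = _ := by rw [← h2]; ring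

end FL

namespace FL

/-- mollification by a bump -/
noncomputable def mo {d : ℕ} (b : ContDiffBump (0 : Ed d)) (f : Ed d → ℝ) : Ed d → ℝ :=
  convolution (b.normed volume) f (ContinuousLinearMap.lsmul ℝ ℝ) volume

theorem mo_apply {d : ℕ} (b : ContDiffBump (0 : Ed d)) (f : Ed d → ℝ) (x : Ed d) :
    mo b f x = ∫ t, b.normed volume t * f (x - t) := rfl

theorem mo_apply' {d : ℕ} (b : ContDiffBump (0 : Ed d)) (f : Ed d → ℝ) (x : Ed d) :
    mo b f x = ∫ t, b.normed volume (x - t) * f t := by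
  unfold mo; rw [convolution_eq_swap]; rfl

theorem mo_smooth {d : ℕ} (b : ContDiffBump (0 : Ed d)) {f : Ed d → ℝ} (hf : LocallyIntegrable f) :
    ContDiff ℝ (⊤ : ℕ∞) (mo b f) :=
  HasCompactSupport.contDiff_convolution_left _ b.hasCompactSupport_normed b.contDiff_normed hf

theorem mo_compact {d : ℕ} (b : ContDiffBump (0 : Ed d)) {f : Ed d → ℝ} (hf : HasCompactSupport f) :
    HasCompactSupport (mo b f) :=
  HasCompactSupport.convolution _ b.hasCompactSupport_normed hf

theorem mo_int {d : ℕ} (b : ContDiffBump (0 : Ed d)) {f : Ed d → ℝ} (hf : LocallyIntegrable f)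
    (x : Ed d) : Integrable (fun t => b.normed volume t * f (x - t)) :=
  HasCompactSupport.convolutionExists_left (ContinuousLinearMap.lsmul ℝ ℝ)
    b.hasCompactSupport_normed b.continuous_normed hf x

theorem mo_DD {d : ℕ} (b : ContDiffBump (0 : Ed d)) {f : Ed d → ℝ} (hf : LocallyIntegrable f)
    (h : Ed d) : DD (mo b f) h = mo b (DD f h) := by
  ext x
  have i1 := mo_int b hf x
  have i2 := mo_int b hf (x + h)
  have i3 := mo_int b hf (x - h)
  rw [mo_apply]
  simp only [DD]
  rw [mo_apply, mo_apply, mo_apply, ← integral_const_mul, ← integral_sub' (i1.const_mul 2) i2,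
    ← integral_sub' ((i1.const_mul 2).sub i2) i3]
  congr 1; ext t
  simp only [Pi.sub_apply]
  rw [sub_add_eq_add_sub, sub_right_comm x t h]; ring

theorem mo_dual {d : ℕ} (b : ContDiffBump (0 : Ed d)) {f g : Ed d → ℝ} (hf : LocallyIntegrable f)
    (hfm : Measurable f)
    (hg : Continuous g) (hgc : HasCompactSupport g) :
    ∫ x, f x * mo b g x = ∫ x, mo b f x * g x := by
  obtain ⟨r, hr⟩ := hgc.isCompact.isBounded.subset_closedBall (0 : Ed d)
  have hη := b.continuous_normed (μ := (volume : Measure (Ed d)))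
  obtain ⟨M, hM⟩ := b.hasCompactSupport_normed.exists_bound_of_continuous hη
  have hgi : Integrable g := hg.integrable_of_hasCompactSupport hgc
  have hfi : Integrable ((closedBall (0 : Ed d) (r + b.rOut)).indicator f) :=
    (integrable_indicator_iff measurableSet_closedBall).2
      (hf.integrableOn_isCompact (isCompact_closedBall _ _))
  have hprod := (hfi.mul_prod hgi).norm.const_mul M
  have hF : Integrable (fun z : Ed d × Ed d => f z.1 * (b.normed volume (z.1 - z.2) * g z.2))
      ((volume : Measure (Ed d)).prod volume) := by
    refine hprod.mono' ?_ ?_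
    · have h1 : Measurable (fun z : Ed d × Ed d => b.normed volume (z.1 - z.2) * g z.2) :=
        Continuous.measurable (by fun_prop)
      exact ((hfm.comp measurable_fst).mul h1).aestronglyMeasurable
    · refine Eventually.of_forall fun z => ?_
      by_cases hz : g z.2 = 0
      · simp [hz]
      by_cases hz2 : b.normed volume (z.1 - z.2) = 0
      · rw [hz2]; simp only [zero_mul, mul_zero, norm_zero]
        have := (norm_nonneg _).trans (hM 0)
        positivity
      have a1 : ‖z.2‖ ≤ r := by
        have := hr (subset_tsupport _ hz); rwa [mem_closedBall_zero_iff] at this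
      have a2 : ‖z.1 - z.2‖ ≤ b.rOut := by
        have : z.1 - z.2 ∈ Function.support (b.normed volume) := hz2
        rw [b.support_normed_eq, mem_ball_zero_iff] at this; exact this.le
      have a3 : z.1 ∈ closedBall (0 : Ed d) (r + b.rOut) := by
        rw [mem_closedBall_zero_iff]
        have := norm_add_le (z.1 - z.2) z.2
        rw [sub_add_cancel] at this; linarith
      rw [indicator_of_mem a3, norm_mul, norm_mul, norm_mul]
      have := hM (z.1 - z.2)
      calc _ ≤ ‖f z.1‖ * (M * ‖g z.2‖) := by gcongr
        _ = _ := by ring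
  have e1 : ∫ x, f x * mo b g x = ∫ x, ∫ y, f x * (b.normed volume (x - y) * g y) := by
    congr 1; ext x; rw [mo_apply', integral_const_mul]
  rw [e1, integral_integral_swap hF]
  congr 1; ext y
  rw [mo_apply', ← integral_mul_const]
  congr 1; ext x
  rw [← b.normed_neg, neg_sub]; ring

theorem quad_identity {d : ℕ} {u χ : Ed d → ℝ} (hu : Continuous u) (hχ : Continuous χ)
    (hc : HasCompactSupport χ) (h : Ed d) :
    ∫ x, u x * DD (fun y => χ y * u y) h x =
      1 / 2 * (∫ x, (u x - u (x + h)) ^ 2 * (χ x + χ (x + h))) + 1 / 2 * ∫ x, u x ^ 2 * DD χ h x := by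
  have hcp : HasCompactSupport (fun x => χ (x + h)) :=
    hc.comp_homeomorph (Homeomorph.addRight h)
  have hcm : HasCompactSupport (fun x => χ (x - h)) :=
    hc.comp_homeomorph (Homeomorph.subRight h)
  have I : ∀ {g : Ed d → ℝ} {k : Ed d → ℝ}, Continuous g → Continuous k → HasCompactSupport k →
      Integrable (fun x => g x * k x) := fun hg hk hkc =>
    (hg.mul hk).integrable_of_hasCompactSupport hkc.mul_left
  have a1 : Integrable (fun x => u x ^ 2 * χ x) := I (by fun_prop) hχ hc
  have a2 : Integrable (fun x => u x ^ 2 * χ (x + h)) := I (by fun_prop) (by fun_prop) hcp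
  have a3 : Integrable (fun x => u x ^ 2 * χ (x - h)) := I (by fun_prop) (by fun_prop) hcm
  have a4 : Integrable (fun x => u (x + h) ^ 2 * χ x) := I (by fun_prop) hχ hc
  have a5 : Integrable (fun x => u (x + h) ^ 2 * χ (x + h)) := I (by fun_prop) (by fun_prop) hcp
  have a6 : Integrable (fun x => u x * u (x + h) * χ x) := I (by fun_prop) hχ hc
  have a7 : Integrable (fun x => u x * u (x + h) * χ (x + h)) := I (by fun_prop) (by fun_prop) hcp
  have a8 : Integrable (fun x => u x * u (x - h) * χ (x - h)) := I (by fun_prop) (by fun_prop) hcm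
  have t1 : ∫ x, u (x + h) ^ 2 * χ (x + h) = ∫ x, u x ^ 2 * χ x :=
    integral_add_right_eq_self (fun x => u x ^ 2 * χ x) h
  have t2 : ∫ x, u (x + h) ^ 2 * χ x = ∫ x, u x ^ 2 * χ (x - h) := by
    rw [← integral_add_right_eq_self (fun x => u x ^ 2 * χ (x - h)) h]; simp
  have t3 : ∫ x, u x * u (x + h) * χ x = ∫ x, u x * u (x - h) * χ (x - h) := by
    rw [← integral_add_right_eq_self (fun x => u x * u (x - h) * χ (x - h)) h]
    simp only [add_sub_cancel_right]; congr 1; ext x; ring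
  have L : ∫ x, u x * DD (fun y => χ y * u y) h x = 2 * (∫ x, u x ^ 2 * χ x)
      - (∫ x, u x * u (x + h) * χ (x + h)) - ∫ x, u x * u (x - h) * χ (x - h) := by
    rw [← integral_const_mul, ← integral_sub' (a1.const_mul 2) a7,
      ← integral_sub' ((a1.const_mul 2).sub a7) a8]
    congr 1; ext x; simp only [DD, Pi.sub_apply]; ring
  have Q : ∫ x, u x ^ 2 * DD χ h x = 2 * (∫ x, u x ^ 2 * χ x)
      - (∫ x, u x ^ 2 * χ (x + h)) - ∫ x, u x ^ 2 * χ (x - h) := by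
    rw [← integral_const_mul, ← integral_sub' (a1.const_mul 2) a2,
      ← integral_sub' ((a1.const_mul 2).sub a2) a3]
    congr 1; ext x; simp only [DD, Pi.sub_apply]; ring
  have P : ∫ x, (u x - u (x + h)) ^ 2 * (χ x + χ (x + h)) =
      (∫ x, u x ^ 2 * χ x) + (∫ x, u x ^ 2 * χ (x + h)) + (∫ x, u (x + h) ^ 2 * χ x)
      + (∫ x, u (x + h) ^ 2 * χ (x + h)) - 2 * (∫ x, u x * u (x + h) * χ x)
      - 2 * ∫ x, u x * u (x + h) * χ (x + h) := by
    rw [← integral_const_mul, ← integral_const_mul, ← integral_add' a1 a2,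
      ← integral_add' (a1.add a2) a4, ← integral_add' ((a1.add a2).add a4) a5,
      ← integral_sub' (((a1.add a2).add a4).add a5) (a6.const_mul 2),
      ← integral_sub' ((((a1.add a2).add a4).add a5).sub (a6.const_mul 2)) (a7.const_mul 2)]
    congr 1; ext x; simp only [Pi.add_apply, Pi.sub_apply]; ring
  rw [L, Q, P, t1, t2, t3]; ring

/-- the localized energy -/
noncomputable def NN (d : ℕ) (s : ℝ) (u χ : Ed d → ℝ) : ℝ≥0∞ :=
  ∫⁻ h, ∫⁻ x, ENNReal.ofReal (Kk d s h * ((u x - u (x + h)) ^ 2 * (χ x + χ (x + h))))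

theorem main_eps {d : ℕ} (hd : 1 ≤ d) {s : ℝ} (hs : s ∈ Set.Ioo (0:ℝ) 1) {Cds : ℝ} (hC : 0 < Cds)
    {v V χ : Ed d → ℝ} (hvm : Measurable v) (hvl : LocallyIntegrable v)
    (hvi : Integrable (fun x => |v x| * (1 + ‖x‖) ^ (-((d:ℝ) + 2 * s))))
    (hdist : IsDistFracLap d s Cds v V)
    (hχ : ContDiff ℝ (⊤ : ℕ∞) χ) (hc : HasCompactSupport χ) (hχ0 : ∀ x, 0 ≤ χ x)
    (b : ContDiffBump (0 : Ed d))
    (hui : Integrable (fun x => |mo b v x ^ 2| * (1 + ‖x‖) ^ (-((d:ℝ) + 2 * s))))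
    {W : Ed d → ℝ} (hW : ∀ x, ∫ h, |DD χ h x| * Kk d s h ≤ W x)
    (hWi : Integrable (fun x => mo b v x ^ 2 * W x)) :
    0 ≤ 4 / Cds * (∫ x, V x * mo b (fun y => χ y * mo b v y) x) + ∫ x, mo b v x ^ 2 * W x ∧
    NN d s (mo b v) χ ≤ ENNReal.ofReal
      (4 / Cds * (∫ x, V x * mo b (fun y => χ y * mo b v y) x) + ∫ x, mo b v x ^ 2 * W x) := by
  set u := mo b v with hu
  have hus : ContDiff ℝ (⊤ : ℕ∞) u := mo_smooth b hvl
  have huc := hus.continuous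
  have hχc := hχ.continuous
  set ψ : Ed d → ℝ := fun y => χ y * u y with hψ
  have hψs : ContDiff ℝ (⊤ : ℕ∞) ψ := hχ.mul hus
  have hψc : HasCompactSupport ψ := hc.mul_right
  have hψl : LocallyIntegrable ψ := hψs.continuous.locallyIntegrable
  have hφs : ContDiff ℝ (⊤ : ℕ∞) (mo b ψ) := mo_smooth b hψl
  have hφc : HasCompactSupport (mo b ψ) := mo_compact b hψc
  obtain ⟨i1, e1⟩ := pair_eq hd hs Cds hφs hφc hvm hvi
  rw [hdist _ hφs hφc] at e1
  obtain ⟨i2, e2⟩ := pair_eq hd hs 2 hχ hc (huc.measurable.pow_const 2) hui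
  have hDDc : ∀ (f : Ed d → ℝ), Continuous f → HasCompactSupport f → ∀ h,
      Continuous (DD f h) ∧ HasCompactSupport (DD f h) := by
    intro f hf hfc h
    refine ⟨by unfold DD; fun_prop, ?_⟩
    have hcp : HasCompactSupport (fun x => f (x + h)) :=
      hfc.comp_homeomorph (Homeomorph.addRight h)
    have hcm : HasCompactSupport (fun x => f (x - h)) :=
      hfc.comp_homeomorph (Homeomorph.subRight h)
    exact ((HasCompactSupport.mul_left (f := fun _ => (2:ℝ)) hfc).sub hcp).sub hcm
  have e3 : ∀ h, ∫ x, v x * DD (mo b ψ) h x = 1 / 2 * (∫ x, (u x - u (x + h)) ^ 2 *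
      (χ x + χ (x + h))) + 1 / 2 * ∫ x, u x ^ 2 * DD χ h x := by
    intro h
    obtain ⟨c1, c2⟩ := hDDc ψ hψs.continuous hψc h
    rw [mo_DD b hψl, mo_dual b hvl hvm c1 c2]
    exact quad_identity huc hχc hc h
  set P : Ed d → ℝ := fun h => ∫ x, (u x - u (x + h)) ^ 2 * (χ x + χ (x + h)) with hP
  set Q : Ed d → ℝ := fun h => ∫ x, u x ^ 2 * DD χ h x with hQ
  have hP0 : ∀ h, 0 ≤ P h := fun h => integral_nonneg fun x =>
    mul_nonneg (sq_nonneg _) (add_nonneg (hχ0 _) (hχ0 _))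
  have e4 : ∀ h, Kk d s h * P h = 2 * (Kk d s h * ∫ x, v x * DD (mo b ψ) h x) - Kk d s h * Q h := by
    intro h; rw [e3 h]; ring
  have iKP : Integrable (fun h => Kk d s h * P h) := by
    simp_rw [e4]; exact (i1.const_mul 2).sub i2
  have e5 : ∫ h, Kk d s h * P h = 4 / Cds * (∫ x, V x * mo b ψ x) - ∫ h, Kk d s h * Q h := by
    simp_rw [e4]
    rw [integral_sub (i1.const_mul 2) i2, integral_const_mul, e1]
    field_simp; ring
  have e6 : |∫ h, Kk d s h * Q h| ≤ ∫ x, u x ^ 2 * W x := by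
    have : ∫ h, Kk d s h * Q h = ∫ x, u x ^ 2 * fracLap d s 2 χ x := by rw [e2]; ring
    rw [this, ← Real.norm_eq_abs]
    refine norm_integral_le_of_norm_le hWi (Eventually.of_forall fun x => ?_)
    rw [norm_mul, Real.norm_of_nonneg (sq_nonneg _)]
    refine mul_le_mul_of_nonneg_left ?_ (sq_nonneg _)
    rw [fracLap_eq hd hs 2 hχ hc, div_self two_ne_zero, one_mul]
    refine (norm_integral_le_integral_norm _).trans (le_trans (le_of_eq ?_) (hW x))
    congr 1; ext h
    rw [norm_mul, Real.norm_eq_abs, Real.norm_of_nonneg (Kk_nonneg h)]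
  have hle : ∫ h, Kk d s h * P h ≤ 4 / Cds * (∫ x, V x * mo b ψ x) + ∫ x, u x ^ 2 * W x := by
    rw [e5]; linarith [neg_abs_le (∫ h, Kk d s h * Q h)]
  refine ⟨(integral_nonneg fun h => mul_nonneg (Kk_nonneg h) (hP0 h)).trans hle, ?_⟩
  refine le_trans (le_of_eq ?_) (ENNReal.ofReal_le_ofReal hle)
  rw [ofReal_integral_eq_lintegral_ofReal iKP
    (Eventually.of_forall fun h => mul_nonneg (Kk_nonneg h) (hP0 h))]
  unfold NN
  refine lintegral_congr fun h => ?_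
  rw [hP, ← integral_const_mul]
  symm
  refine ofReal_integral_eq_lintegral_ofReal ?_ (Eventually.of_forall fun x =>
    mul_nonneg (Kk_nonneg h) (mul_nonneg (sq_nonneg _) (add_nonneg (hχ0 _) (hχ0 _))))
  refine Integrable.const_mul ?_ _
  refine Continuous.integrable_of_hasCompactSupport (by fun_prop) ?_
  exact HasCompactSupport.mul_left (hc.add (hc.comp_homeomorph (Homeomorph.addRight h)))

end FL

namespace FL

theorem lintegral_normed {d : ℕ} (b : ContDiffBump (0 : Ed d)) :
    ∫⁻ y, ENNReal.ofReal (b.normed volume y) = 1 := by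
  rw [← ofReal_integral_eq_lintegral_ofReal b.integrable_normed
    (Eventually.of_forall b.nonneg_normed), b.integral_normed, ENNReal.ofReal_one]

theorem jensen_q {α : Type*} [MeasurableSpace α] (ν : Measure α) [IsProbabilityMeasure ν]
    {g : α → ℝ≥0∞} (hg : Measurable g) {q : ℝ} (hq : 1 ≤ q) :
    (∫⁻ x, g x ∂ν) ^ q ≤ ∫⁻ x, g x ^ q ∂ν := by
  have h := eLpNorm'_le_eLpNorm'_of_exponent_le (f := g) (μ := ν) one_pos hq
    hg.aestronglyMeasurable
  simp only [eLpNorm', enorm_eq_self, ENNReal.rpow_one, div_one] at h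
  have := ENNReal.rpow_le_rpow h (by linarith : 0 ≤ q)
  rwa [← ENNReal.rpow_mul, one_div, inv_mul_cancel₀ (by linarith), ENNReal.rpow_one] at this

theorem mo_weight {d : ℕ} (b : ContDiffBump (0 : Ed d)) {f : Ed d → ℝ} (hf : Measurable f)
    {q : ℝ} (hq : 1 ≤ q) {m : Ed d → ℝ≥0∞} (hm : Measurable m) {C : ℝ≥0∞}
    (hC : ∀ᵐ x, ∫⁻ y, ENNReal.ofReal (b.normed volume y) * m (x + y) ≤ C * m x) :
    ∫⁻ x, ‖mo b f x‖ₑ ^ q * m x ≤ C * ∫⁻ x, ‖f x‖ₑ ^ q * m x := by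
  have hηm : Measurable (fun y : Ed d => ENNReal.ofReal (b.normed volume y)) :=
    b.continuous_normed.measurable.ennreal_ofReal
  have hprob : IsProbabilityMeasure ((volume : Measure (Ed d)).withDensity
      (fun y => ENNReal.ofReal (b.normed volume y))) := ⟨by
    rw [withDensity_apply _ MeasurableSet.univ, Measure.restrict_univ, lintegral_normed]⟩
  have h1 : ∀ x, ‖mo b f x‖ₑ ^ q ≤ ∫⁻ t, ENNReal.ofReal (b.normed volume t) * ‖f (x - t)‖ₑ ^ q := by
    intro x
    have hfm : Measurable (fun t => ‖f (x - t)‖ₑ) := (hf.comp (measurable_const.sub measurable_id)).enorm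
    have a1 : ‖mo b f x‖ₑ ≤ ∫⁻ t, ENNReal.ofReal (b.normed volume t) * ‖f (x - t)‖ₑ := by
      rw [mo_apply]
      refine (enorm_integral_le_lintegral_enorm _).trans (le_of_eq ?_)
      refine lintegral_congr fun t => ?_
      rw [enorm_mul, Real.enorm_of_nonneg (b.nonneg_normed t)]
    refine (ENNReal.rpow_le_rpow a1 (by linarith)).trans ?_
    have := jensen_q ((volume : Measure (Ed d)).withDensity
      (fun y => ENNReal.ofReal (b.normed volume y))) hfm hq
    rw [lintegral_withDensity_eq_lintegral_mul _ hηm hfm,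
      lintegral_withDensity_eq_lintegral_mul _ hηm (hfm.pow_const q)] at this
    exact this
  have hfq : Measurable (fun x => ‖f x‖ₑ ^ q) := hf.enorm.pow_const q
  calc _ ≤ ∫⁻ x, ∫⁻ t, ENNReal.ofReal (b.normed volume t) * ‖f (x - t)‖ₑ ^ q * m x := by
        refine lintegral_mono fun x => ?_
        simp only
        have hmm : Measurable (fun t => ENNReal.ofReal (b.normed volume t) * ‖f (x - t)‖ₑ ^ q) :=
          hηm.mul (hfq.comp (measurable_const.sub measurable_id))
        rw [lintegral_mul_const _ hmm]
        gcongr; exact h1 x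
    _ = ∫⁻ t, ∫⁻ x, ENNReal.ofReal (b.normed volume t) * ‖f (x - t)‖ₑ ^ q * m x := by
        refine lintegral_lintegral_swap (Measurable.aemeasurable ?_)
        exact ((hηm.comp measurable_snd).mul (hfq.comp (measurable_fst.sub measurable_snd))).mul
          (hm.comp measurable_fst)
    _ = ∫⁻ t, ∫⁻ x, ENNReal.ofReal (b.normed volume t) * ‖f x‖ₑ ^ q * m (x + t) := by
        refine lintegral_congr fun t => ?_
        rw [← lintegral_add_right_eq_self _ t]
        simp
    _ = ∫⁻ x, ∫⁻ t, ENNReal.ofReal (b.normed volume t) * ‖f x‖ₑ ^ q * m (x + t) := by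
        refine lintegral_lintegral_swap (Measurable.aemeasurable ?_)
        exact ((hηm.comp measurable_fst).mul (hfq.comp measurable_snd)).mul
          (hm.comp (measurable_snd.add measurable_fst))
    _ ≤ ∫⁻ x, C * (‖f x‖ₑ ^ q * m x) := by
        refine lintegral_mono_ae ?_
        filter_upwards [hC] with x hx
        have : ∀ t, ENNReal.ofReal (b.normed volume t) * ‖f x‖ₑ ^ q * m (x + t)
          = ‖f x‖ₑ ^ q * (ENNReal.ofReal (b.normed volume t) * m (x + t)) := fun t => by ring
        simp_rw [this]
        have hmm : Measurable (fun t => ENNReal.ofReal (b.normed volume t) * m (x + t)) :=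
          hηm.mul (hm.comp (measurable_const.add measurable_id))
        rw [lintegral_const_mul _ hmm,
          mul_left_comm]
        gcongr
    _ = _ := lintegral_const_mul _ (hfq.mul hm)

theorem ratio_rpow {a b : ℝ} (ha : 0 < a) (hb : 0 < b) (h1 : a ≤ 2 * b) (h2 : b ≤ 2 * a) (e : ℝ) :
    a ^ e ≤ 2 ^ |e| * b ^ e := by
  rcases le_total 0 e with he | he
  · rw [abs_of_nonneg he, ← Real.mul_rpow (by norm_num) hb.le]
    exact Real.rpow_le_rpow ha.le h1 he
  · rw [abs_of_nonpos he]
    have : (2:ℝ) ^ (-e) = (1 / 2) ^ e := by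
      rw [one_div, Real.inv_rpow (by norm_num), Real.rpow_neg (by norm_num)]
    rw [this, ← Real.mul_rpow (by norm_num) hb.le]
    exact Real.rpow_le_rpow_of_nonpos (by positivity) (by linarith) he

theorem supp_normed {d : ℕ} (b : ContDiffBump (0 : Ed d)) {y : Ed d}
    (hy : b.normed volume y ≠ 0) : ‖y‖ < b.rOut := by
  have : y ∈ Function.support (b.normed volume) := hy
  rwa [b.support_normed_eq, mem_ball_zero_iff] at this

theorem avg_bound {d : ℕ} (b : ContDiffBump (0 : Ed d)) {g : Ed d → ℝ≥0∞} {C : ℝ≥0∞}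
    (h : ∀ y, ‖y‖ < b.rOut → g y ≤ C) :
    ∫⁻ y, ENNReal.ofReal (b.normed volume y) * g y ≤ C := by
  calc _ ≤ ∫⁻ y, ENNReal.ofReal (b.normed volume y) * C := by
        refine lintegral_mono fun y => ?_
        by_cases hy : b.normed volume y = 0
        · simp [hy]
        · exact mul_le_mul_right (h y (supp_normed b hy)) _
    _ = _ := by
        rw [lintegral_mul_const _ b.continuous_normed.measurable.ennreal_ofReal, lintegral_normed,
          one_mul]

theorem A1_pow {d : ℕ} (hd : 1 ≤ d) {a : ℝ} (ha : a ∈ Set.Ico (0:ℝ) d) :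
    ∃ C : ℝ, 0 ≤ C ∧ ∀ b : ContDiffBump (0 : Ed d), b.rOut ≤ 2 * b.rIn → ∀ x : Ed d, x ≠ 0 →
      ∫⁻ y, ENNReal.ofReal (b.normed volume y) * ENNReal.ofReal (‖x + y‖ ^ (-a))
        ≤ ENNReal.ofReal (C * ‖x‖ ^ (-a)) := by
  set g : Ed d → ℝ := (closedBall (0 : Ed d) 3).indicator (fun z => ‖z‖ ^ (-a)) with hg
  have hgi : Integrable g := (integrable_indicator_iff measurableSet_closedBall).2
    (pow_integrable_ball hd ha.2 3)
  have hg0 : ∀ z, 0 ≤ g z := fun z => indicator_nonneg (fun z _ => by positivity) z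
  set J := ∫ z, g z with hJ
  have hJ0 : 0 ≤ J := integral_nonneg hg0
  set ω : ℝ := volume.real (ball (0 : Ed d) 1) with hω
  have hω0 : 0 < ω := by
    rw [hω, Measure.real]
    exact ENNReal.toReal_pos (measure_ball_pos _ _ one_pos).ne' measure_ball_lt_top.ne
  refine ⟨2 ^ a + 2 ^ d / ω * J * 2 ^ a, by positivity, fun b hb x hx => ?_⟩
  have hx0 : 0 < ‖x‖ := norm_pos_iff.2 hx
  set ε := b.rOut with hε
  have hε0 : 0 < ε := b.rOut_pos
  have hhalf : (‖x‖ / 2) ^ (-a) = 2 ^ a * ‖x‖ ^ (-a) := by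
    rw [Real.div_rpow hx0.le (by norm_num), Real.rpow_neg (by norm_num : (0:ℝ) ≤ 2)]
    field_simp
  rcases le_or_gt (2 * ε) ‖x‖ with hxe | hxe
  · refine avg_bound b fun y hy => ENNReal.ofReal_le_ofReal ?_
    have h1 : ‖x‖ / 2 ≤ ‖x + y‖ := by
      have := norm_sub_norm_le x (-y)
      rw [sub_neg_eq_add, norm_neg] at this; linarith
    calc _ ≤ (‖x‖ / 2) ^ (-a) :=
          Real.rpow_le_rpow_of_nonpos (by positivity) h1 (by linarith [ha.1])
      _ = 2 ^ a * ‖x‖ ^ (-a) := hhalf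
      _ ≤ _ := by
        gcongr
        have : 0 ≤ 2 ^ d / ω * J * 2 ^ a := by positivity
        linarith
  · have hη : ∀ y, b.normed volume y ≤ 2 ^ d / (ε ^ d * ω) := by
      intro y
      have := b.normed_le_div_measure_closedBall_rOut volume 2 hb y
      rw [finrank_euclideanSpace_fin] at this
      refine this.trans (le_of_eq ?_)
      congr 1
      rw [Measure.real, Measure.addHaar_closedBall _ _ hε0.le, finrank_euclideanSpace_fin,
        ENNReal.toReal_mul, ENNReal.toReal_ofReal (by positivity), hω, Measure.real]
    have hi2 : Integrable (fun z => 2 ^ d / (ε ^ d * ω) * (ε ^ (-a) * g (ε⁻¹ • z))) :=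
      (((integrable_comp_smul_iff volume g (inv_ne_zero hε0.ne')).2 hgi).const_mul _).const_mul _
    calc _ ≤ ∫⁻ y, ENNReal.ofReal (2 ^ d / (ε ^ d * ω) * (ε ^ (-a) * g (ε⁻¹ • (x + y)))) := by
          refine lintegral_mono fun y => ?_
          by_cases hy : b.normed volume y = 0
          · simp [hy]
          simp only
          rw [← ENNReal.ofReal_mul (b.nonneg_normed y)]
          refine ENNReal.ofReal_le_ofReal ?_
          have hy' := supp_normed b hy
          have h3 : ‖x + y‖ ≤ 3 * ε := (norm_add_le _ _).trans (by linarith)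
          have h4 : ε⁻¹ • (x + y) ∈ closedBall (0 : Ed d) 3 := by
            rw [mem_closedBall_zero_iff, norm_smul, norm_inv, Real.norm_of_nonneg hε0.le,
              inv_mul_le_iff₀ hε0]
            linarith
          have h5 : ε ^ (-a) * g (ε⁻¹ • (x + y)) = ‖x + y‖ ^ (-a) := by
            rw [hg, indicator_of_mem h4, norm_smul, norm_inv, Real.norm_of_nonneg hε0.le,
              ← Real.mul_rpow hε0.le (by positivity)]
            congr 1; field_simp
          rw [h5]
          gcongr
          exact hη y
      _ = ∫⁻ z, ENNReal.ofReal (2 ^ d / (ε ^ d * ω) * (ε ^ (-a) * g (ε⁻¹ • z))) :=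
          lintegral_add_left_eq_self
            (fun z => ENNReal.ofReal (2 ^ d / (ε ^ d * ω) * (ε ^ (-a) * g (ε⁻¹ • z)))) x
      _ = ENNReal.ofReal (∫ z, 2 ^ d / (ε ^ d * ω) * (ε ^ (-a) * g (ε⁻¹ • z))) := by
          rw [ofReal_integral_eq_lintegral_ofReal hi2 (Eventually.of_forall fun z => ?_)]
          have := hg0 (ε⁻¹ • z)
          simp only [Pi.zero_apply]
          positivity
      _ ≤ _ := by
          refine ENNReal.ofReal_le_ofReal ?_
          rw [integral_const_mul, integral_const_mul, Measure.integral_comp_smul volume g ε⁻¹,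
            finrank_euclideanSpace_fin, inv_pow, inv_inv, abs_of_nonneg (by positivity), smul_eq_mul]
          have h6 : ε ^ (-a) ≤ 2 ^ a * ‖x‖ ^ (-a) := by
            rw [← hhalf]
            exact Real.rpow_le_rpow_of_nonpos (by positivity) (by linarith) (by linarith [ha.1])
          calc _ = 2 ^ d / ω * J * ε ^ (-a) := by rw [← hJ]; field_simp
            _ ≤ 2 ^ d / ω * J * (2 ^ a * ‖x‖ ^ (-a)) := by gcongr
            _ = (2 ^ d / ω * J * 2 ^ a) * ‖x‖ ^ (-a) := by ring
            _ ≤ _ := by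
              gcongr
              have : (0:ℝ) ≤ 2 ^ a := by positivity
              linarith

/-- model weight -/
noncomputable def om {d : ℕ} (γ₀ γ : ℝ) (x : Ed d) : ℝ := ‖x‖ ^ (-γ₀) * (1 + ‖x‖) ^ (γ₀ - γ)

theorem om_compare {d : ℕ} (hd : 1 ≤ d) {ρ : Ed d → ℝ} {c C γ₀ γ : ℝ}
    (hw : TwoPowerWeight d ρ c C γ₀ γ) :
    ∀ᵐ x, ρ x ≤ C * 2 ^ |γ₀ - γ| * om γ₀ γ x ∧ c * om γ₀ γ x ≤ 2 ^ |γ₀ - γ| * ρ x := by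
  obtain ⟨hc, hcC, h1, h2⟩ := hw
  have hne : ∀ᵐ x : Ed d, x ≠ 0 := by
    have : Nonempty (Fin d) := ⟨⟨0, hd⟩⟩
    exact Measure.ae_ne volume 0
  filter_upwards [h1, h2, hne] with x h1 h2 hx
  have hC : 0 < C := by linarith
  have hx0 : 0 < ‖x‖ := norm_pos_iff.2 hx
  unfold om
  have hp1 : (0:ℝ) < ‖x‖ ^ (-γ₀) := by positivity
  have hp2 : (0:ℝ) < 2 ^ |γ₀ - γ| := by positivity
  rcases le_or_gt ‖x‖ 1 with hx1 | hx1
  · obtain ⟨a1, a2⟩ := h1 hx1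
    have r1 := ratio_rpow (a := 1) (b := 1 + ‖x‖) (by norm_num) (by positivity) (by linarith)
      (by linarith) (γ₀ - γ)
    have r2 := ratio_rpow (a := 1 + ‖x‖) (b := 1) (by positivity) (by norm_num) (by linarith)
      (by linarith) (γ₀ - γ)
    rw [Real.one_rpow] at r1 r2
    constructor
    · calc ρ x ≤ C * ‖x‖ ^ (-γ₀) * 1 := by linarith
        _ ≤ C * ‖x‖ ^ (-γ₀) * (2 ^ |γ₀ - γ| * (1 + ‖x‖) ^ (γ₀ - γ)) := by gcongr
        _ = _ := by ring
    · calc _ ≤ c * (‖x‖ ^ (-γ₀) * (2 ^ |γ₀ - γ| * 1)) := by gcongr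
        _ = 2 ^ |γ₀ - γ| * (c * ‖x‖ ^ (-γ₀)) := by ring
        _ ≤ _ := by gcongr
  · obtain ⟨a1, a2⟩ := h2 hx1
    have e : ‖x‖ ^ (-γ) = ‖x‖ ^ (-γ₀) * ‖x‖ ^ (γ₀ - γ) := by
      rw [← Real.rpow_add hx0]; congr 1; ring
    rw [e] at a1 a2
    have r1 := ratio_rpow (a := ‖x‖) (b := 1 + ‖x‖) hx0 (by positivity) (by linarith)
      (by linarith) (γ₀ - γ)
    have r2 := ratio_rpow (a := 1 + ‖x‖) (b := ‖x‖) (by positivity) hx0 (by linarith)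
      (by linarith) (γ₀ - γ)
    constructor
    · calc ρ x ≤ C * (‖x‖ ^ (-γ₀) * ‖x‖ ^ (γ₀ - γ)) := a2
        _ ≤ C * (‖x‖ ^ (-γ₀) * (2 ^ |γ₀ - γ| * (1 + ‖x‖) ^ (γ₀ - γ))) := by gcongr
        _ = _ := by ring
    · calc _ ≤ c * (‖x‖ ^ (-γ₀) * (2 ^ |γ₀ - γ| * ‖x‖ ^ (γ₀ - γ))) := by gcongr
        _ = 2 ^ |γ₀ - γ| * (c * (‖x‖ ^ (-γ₀) * ‖x‖ ^ (γ₀ - γ))) := by ring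
        _ ≤ _ := by gcongr

theorem A1_rho {d : ℕ} (hd : 1 ≤ d) {ρ : Ed d → ℝ} {c C γ₀ γ : ℝ}
    (hw : TwoPowerWeight d ρ c C γ₀ γ) (ha : γ₀ ∈ Set.Ico (0:ℝ) d) :
    ∃ D : ℝ, 0 ≤ D ∧ ∀ b : ContDiffBump (0 : Ed d), b.rOut ≤ 2 * b.rIn → b.rOut ≤ 1 → ∀ᵐ x : Ed d,
      ∫⁻ y, ENNReal.ofReal (b.normed volume y) * ENNReal.ofReal (ρ (x + y))
        ≤ ENNReal.ofReal D * ENNReal.ofReal (ρ x) := by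
  obtain ⟨A, hA0, hA⟩ := A1_pow hd ha
  have hcmp := om_compare hd hw
  obtain ⟨hc, hcC, -, -⟩ := hw
  have hC : 0 < C := by linarith
  set T : ℝ := 2 ^ |γ₀ - γ| with hT
  have hT0 : 0 < T := by positivity
  refine ⟨C * T * T * A * (T / c), by positivity, fun b hb hb1 => ?_⟩
  have hne : ∀ᵐ x : Ed d, x ≠ 0 := by
    have : Nonempty (Fin d) := ⟨⟨0, hd⟩⟩
    exact Measure.ae_ne volume 0
  filter_upwards [hcmp, hne] with x hx hx0
  have htr : ∀ᵐ y : Ed d, ρ (x + y) ≤ C * T * om γ₀ γ (x + y) := by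
    have := (measurePreserving_add_left (volume : Measure (Ed d)) x).quasiMeasurePreserving.ae hcmp
    filter_upwards [this] with y hy using hy.1
  calc _ ≤ ∫⁻ y, ENNReal.ofReal (C * T * T * (1 + ‖x‖) ^ (γ₀ - γ)) *
          (ENNReal.ofReal (b.normed volume y) * ENNReal.ofReal (‖x + y‖ ^ (-γ₀))) := by
        refine lintegral_mono_ae ?_
        filter_upwards [htr] with y hy
        by_cases hy0 : b.normed volume y = 0
        · simp [hy0]
        have hyn := supp_normed b hy0
        rw [mul_left_comm, ← ENNReal.ofReal_mul (p := C * T * T * (1 + ‖x‖) ^ (γ₀ - γ)) (by positivity)]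
        gcongr
        refine hy.trans ?_
        unfold om
        have n1 := norm_add_le x y
        have n2 := norm_sub_le (x + y) y
        rw [add_sub_cancel_right] at n2
        have r := ratio_rpow (a := 1 + ‖x + y‖) (b := 1 + ‖x‖) (by positivity) (by positivity)
          (by linarith [norm_nonneg x]) (by linarith [norm_nonneg (x + y)]) (γ₀ - γ)
        calc _ ≤ C * T * (‖x + y‖ ^ (-γ₀) * (T * (1 + ‖x‖) ^ (γ₀ - γ))) := by gcongr
          _ = _ := by ring
    _ = ENNReal.ofReal (C * T * T * (1 + ‖x‖) ^ (γ₀ - γ)) *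
        ∫⁻ y, ENNReal.ofReal (b.normed volume y) * ENNReal.ofReal (‖x + y‖ ^ (-γ₀)) :=
        lintegral_const_mul' _ _ ENNReal.ofReal_ne_top
    _ ≤ ENNReal.ofReal (C * T * T * (1 + ‖x‖) ^ (γ₀ - γ)) * ENNReal.ofReal (A * ‖x‖ ^ (-γ₀)) := by
        gcongr; exact hA b hb x hx0
    _ ≤ _ := by
        rw [← ENNReal.ofReal_mul (by positivity), ← ENNReal.ofReal_mul (by positivity)]
        refine ENNReal.ofReal_le_ofReal ?_
        have h3 : om γ₀ γ x ≤ T / c * ρ x := by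
          rw [div_mul_eq_mul_div, le_div_iff₀ hc]; linarith [hx.2]
        calc _ = C * T * T * A * om γ₀ γ x := by unfold om; ring
          _ ≤ C * T * T * A * (T / c * ρ x) := by gcongr
          _ = _ := by ring

/-- decay weight -/
noncomputable def wt (d : ℕ) (s R : ℝ) (x : Ed d) : ℝ := R ^ d * (R + ‖x‖) ^ (-((d:ℝ) + 2 * s))

theorem A1_wt {d : ℕ} {s : ℝ} {R : ℝ} (hR : 1 ≤ R)
    (b : ContDiffBump (0 : Ed d)) (hb1 : b.rOut ≤ 1) (x : Ed d) :
      ∫⁻ y, ENNReal.ofReal (b.normed volume y) * ENNReal.ofReal (wt d s R (x + y))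
        ≤ ENNReal.ofReal (2 ^ |(-((d:ℝ) + 2 * s))|) * ENNReal.ofReal (wt d s R x) := by
  refine avg_bound b fun y hyn => ?_
  rw [← ENNReal.ofReal_mul (by positivity)]
  refine ENNReal.ofReal_le_ofReal ?_
  unfold wt
  have n1 := norm_add_le x y
  have n2 := norm_sub_le (x + y) y
  rw [add_sub_cancel_right] at n2
  have r := ratio_rpow (a := R + ‖x + y‖) (b := R + ‖x‖) (by positivity) (by positivity)
    (by linarith [norm_nonneg x]) (by linarith [norm_nonneg (x + y)]) (-((d:ℝ) + 2 * s))
  calc _ ≤ R ^ d * (2 ^ |(-((d:ℝ) + 2 * s))| * (R + ‖x‖) ^ (-((d:ℝ) + 2 * s))) := by gcongr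
    _ = _ := by ring

end FL

namespace FL

theorem wt_nonneg {d : ℕ} {s R : ℝ} (hR : 1 ≤ R) (x : Ed d) : 0 ≤ wt d s R x := by
  unfold wt; positivity

theorem wt_meas {d : ℕ} {s R : ℝ} : Measurable (wt d s R) := by
  unfold wt; fun_prop

theorem wt_le {d : ℕ} {s R : ℝ} (hs : s ∈ Set.Ioo (0:ℝ) 1) (hR : 1 ≤ R) (x : Ed d) :
    wt d s R x ≤ (R + ‖x‖) ^ (-(2 * s)) := by
  unfold wt
  have h0 : 0 < R + ‖x‖ := by positivity
  have e : (R + ‖x‖) ^ (-((d:ℝ) + 2 * s)) = ((R + ‖x‖) ^ d)⁻¹ * (R + ‖x‖) ^ (-(2 * s)) := by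
    rw [← Real.rpow_natCast, ← Real.rpow_neg h0.le, ← Real.rpow_add h0]; congr 1; ring
  rw [e, ← mul_assoc]
  refine mul_le_of_le_one_left (by positivity) ?_
  rw [← div_eq_mul_inv, div_le_one (by positivity)]
  gcongr
  linarith [norm_nonneg x]

theorem young_pt {d : ℕ} {s p γ lam R t X : ℝ} (hd0 : (0:ℝ) < d) (hp2 : 2 < p)
    (hγ : γ ∈ Set.Icc (0:ℝ) ((d:ℝ) - (p / 2) * ((d:ℝ) - 2 * s))) (hlam0 : 0 < lam)
    (hR : 1 ≤ R) (ht : 0 ≤ t) (hx : 1 < X)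
    (hconj : (p / 2).HolderConjugate (p / (p - 2))) :
    t ^ 2 * (R ^ d * (R + X) ^ (-((d:ℝ) + 2 * s))) ≤ lam ^ (p / 2) * (t ^ p * X ^ (-γ)) +
      (lam ^ (p / (p - 2)))⁻¹ * (R ^ (-(d:ℝ)) * (1 + R⁻¹ * X) ^ (-(2 * d * (p - 1) / (p - 2)))) := by
  have hp0 : 0 < p := by linarith
  have hpm : 0 < p - 2 := by linarith
  have hR0 : 0 < R := by linarith
  have hx0 : 0 < X := by linarith
  have h0 : 0 < R + X := by linarith
  have hq0 : 0 < p / (p - 2) := by positivity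
  have hw0 : 0 ≤ R ^ d * (R + X) ^ (-((d:ℝ) + 2 * s)) := by positivity
  generalize hwt : R ^ d * (R + X) ^ (-((d:ℝ) + 2 * s)) = w at hw0 ⊢
  obtain ⟨a, ha⟩ : ∃ a, a = lam * (t ^ 2 * X ^ (-(2 * γ / p))) := ⟨_, rfl⟩
  obtain ⟨b, hb⟩ : ∃ b, b = lam⁻¹ * (w * X ^ (2 * γ / p)) := ⟨_, rfl⟩
  have ha0 : 0 ≤ a := by rw [ha]; positivity
  have hb0 : 0 ≤ b := by rw [hb]; positivity
  have hab : t ^ 2 * w = a * b := by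
    have : X ^ (-(2 * γ / p)) * X ^ (2 * γ / p) = 1 := by
      rw [← Real.rpow_add hx0]; simp
    calc _ = (lam * lam⁻¹) * (t ^ 2 * w) * (X ^ (-(2 * γ / p)) * X ^ (2 * γ / p)) := by
          rw [this, mul_inv_cancel₀ hlam0.ne']; ring
      _ = _ := by rw [ha, hb]; ring
  have hy := Real.young_inequality_of_nonneg ha0 hb0 hconj
  have hA : a ^ (p / 2) = lam ^ (p / 2) * (t ^ p * X ^ (-γ)) := by
    have e1 : ((2:ℕ):ℝ) * (p / 2) = p := by push_cast; ring
    have e2 : -(2 * γ / p) * (p / 2) = -γ := by field_simp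
    rw [ha, Real.mul_rpow hlam0.le (by positivity), Real.mul_rpow (by positivity) (by positivity),
      ← Real.rpow_natCast, ← Real.rpow_mul ht, ← Real.rpow_mul hx0.le, e1, e2]
  have hB : b ^ (p / (p - 2)) ≤ (lam ^ (p / (p - 2)))⁻¹ *
      (R ^ (-(d:ℝ)) * (1 + R⁻¹ * X) ^ (-(2 * d * (p - 1) / (p - 2)))) := by
    rw [hb, Real.mul_rpow (by positivity) (by positivity), Real.inv_rpow hlam0.le]
    refine mul_le_mul_of_nonneg_left ?_ (by positivity)
    have hexp : 2 * γ / p ≤ (2 * d - p * (d - 2 * s)) / p := by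
      gcongr; linarith [hγ.2]
    have hg0 := hγ.1
    have k1 : w * X ^ (2 * γ / p) ≤ R ^ d * (R + X) ^ (-(2 * d * (p - 1) / p)) := by
      calc _ ≤ w * (R + X) ^ ((2 * d - p * (d - 2 * s)) / p) := by
            refine mul_le_mul_of_nonneg_left ?_ hw0
            calc _ ≤ (R + X) ^ (2 * γ / p) :=
                  Real.rpow_le_rpow hx0.le (by linarith) (by positivity)
              _ ≤ _ := Real.rpow_le_rpow_of_exponent_le (by linarith) hexp
        _ = _ := by
            have e3 : -((d:ℝ) + 2 * s) + (2 * d - p * (d - 2 * s)) / p = -(2 * d * (p - 1) / p) := by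
              field_simp; ring
            rw [← hwt, mul_assoc, ← Real.rpow_add h0, e3]
    calc _ ≤ (R ^ d * (R + X) ^ (-(2 * d * (p - 1) / p))) ^ (p / (p - 2)) :=
          Real.rpow_le_rpow (by positivity) k1 hq0.le
      _ = _ := by
          have e1 : 1 + R⁻¹ * X = R⁻¹ * (R + X) := by field_simp
          have e2 : -(2 * d * (p - 1) / p) * (p / (p - 2)) = -(2 * d * (p - 1) / (p - 2)) := by
            field_simp
          have e3 : (d:ℝ) * (p / (p - 2)) = -(d:ℝ) + -(-(2 * d * (p - 1) / (p - 2))) := by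
            field_simp; ring
          rw [e1, Real.mul_rpow (by positivity) (by positivity),
            Real.mul_rpow (by positivity) (by positivity), ← Real.rpow_natCast,
            ← Real.rpow_mul hR0.le, ← Real.rpow_mul h0.le, Real.inv_rpow hR0.le,
            ← Real.rpow_neg hR0.le, ← mul_assoc, ← Real.rpow_add hR0, e2, e3]
  rw [hab]
  refine hy.trans ?_
  have hq1 : 1 ≤ p / (p - 2) := hconj.symm.lt.le
  refine add_le_add ?_ ?_
  · rw [← hA]; exact div_le_self (Real.rpow_nonneg ha0 _) (by linarith)
  · exact (div_le_self (Real.rpow_nonneg hb0 _) hq1).trans hB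

theorem young_tail {d : ℕ} (hd : 1 ≤ d) {s : ℝ} (hs : s ∈ Set.Ioo (0:ℝ) 1) {p : ℝ} (hp : 2 ≤ p)
    {γ : ℝ} (hγ : γ ∈ Set.Icc (0:ℝ) ((d:ℝ) - (p / 2) * ((d:ℝ) - 2 * s))) {δ : ℝ} (hδ : 0 < δ) :
    ∃ Λ : ℝ, 0 ≤ Λ ∧ ∀ R : ℝ, 1 ≤ R → ∃ G : Ed d → ℝ, (∀ x, 0 ≤ G x) ∧ Integrable G ∧
      ∫ x, G x ≤ δ ∧ ∀ t : ℝ, 0 ≤ t → ∀ x : Ed d, 1 < ‖x‖ →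
        t ^ 2 * wt d s R x ≤ Λ * (t ^ p * ‖x‖ ^ (-γ)) + G x := by
  have hs0 := hs.1
  have hd0 : (0:ℝ) < d := by exact_mod_cast hd
  rcases eq_or_lt_of_le hp with hp2 | hp2
  · subst hp2
    refine ⟨1, zero_le_one, fun R hR => ⟨fun _ => 0, fun _ => le_rfl, integrable_zero _ _ _,
      by simpa using hδ.le, fun t ht x hx => ?_⟩⟩
    have hγ2 : γ ≤ 2 * s := by have := hγ.2; linarith
    have h1 : wt d s R x ≤ ‖x‖ ^ (-γ) := by
      refine (wt_le hs hR x).trans ?_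
      calc _ ≤ ‖x‖ ^ (-(2 * s)) :=
            Real.rpow_le_rpow_of_nonpos (by linarith) (by linarith) (by linarith)
        _ ≤ _ := Real.rpow_le_rpow_of_exponent_le hx.le (by linarith)
    have e : t ^ (2:ℝ) = t ^ 2 := by exact_mod_cast Real.rpow_natCast t 2
    rw [e, one_mul, add_zero]
    gcongr
  · have hp0 : 0 < p := by linarith
    have hpm : 0 < p - 2 := by linarith
    set q : ℝ := p / (p - 2) with hq
    have hq0 : 0 < q := by positivity
    set r : ℝ := 2 * d * (p - 1) / (p - 2) with hr
    have hrd : (d:ℝ) < r := by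
      rw [hr, lt_div_iff₀ hpm]; nlinarith
    have hconj : (p / 2).HolderConjugate q := by
      rw [Real.holderConjugate_iff]
      refine ⟨by linarith, ?_⟩
      rw [hq]; field_simp; ring
    have hI : Integrable (fun z : Ed d => (1 + ‖z‖) ^ (-r)) :=
      integrable_one_add_norm (by rw [finrank_euclideanSpace_fin]; exact hrd)
    set I := ∫ z : Ed d, (1 + ‖z‖) ^ (-r) with hIdef
    have hI0 : 0 ≤ I := integral_nonneg fun z => by positivity
    set lam : ℝ := (I / δ + 1) ^ (1 / q) with hlam
    have hlam0 : 0 < lam := by positivity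
    have hlamq : lam ^ q = I / δ + 1 := by
      rw [hlam, ← Real.rpow_mul (by positivity), one_div, inv_mul_cancel₀ hq0.ne', Real.rpow_one]
    refine ⟨lam ^ (p / 2), by positivity, fun R hR => ?_⟩
    have hR0 : 0 < R := by linarith
    have hi2 : Integrable (fun z : Ed d => (1 + ‖R⁻¹ • z‖) ^ (-r)) :=
      (integrable_comp_smul_iff volume (fun z : Ed d => (1 + ‖z‖) ^ (-r)) (inv_ne_zero hR0.ne')).2 hI
    refine ⟨fun x => (lam ^ q)⁻¹ * (R ^ (-(d:ℝ)) * (1 + ‖R⁻¹ • x‖) ^ (-r)),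
      fun x => by positivity, (hi2.const_mul _).const_mul _, ?_, fun t ht x hx => ?_⟩
    · rw [integral_const_mul, integral_const_mul,
        Measure.integral_comp_smul volume (fun z : Ed d => (1 + ‖z‖) ^ (-r)) R⁻¹,
        finrank_euclideanSpace_fin, inv_pow, inv_inv, abs_of_nonneg (by positivity), smul_eq_mul,
        Real.rpow_neg hR0.le, Real.rpow_natCast, hlamq, inv_mul_cancel_left₀ (by positivity),
        inv_mul_le_iff₀ (by positivity)]
      rw [add_mul, div_mul_cancel₀ _ hδ.ne']; linarith
    · have e1 : ‖R⁻¹ • x‖ = R⁻¹ * ‖x‖ := by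
        rw [norm_smul, Real.norm_of_nonneg (by positivity)]
      simp only [e1]
      exact young_pt hd0 hp2 hγ hlam0 hR ht hx hconj

theorem sq_le_one_add_rpow {p t : ℝ} (hp : 2 ≤ p) : t ^ 2 ≤ 1 + |t| ^ p := by
  have h0 : 0 ≤ |t| ^ p := by positivity
  rcases le_total |t| 1 with h | h
  · rw [← sq_abs]; nlinarith [abs_nonneg t]
  · have := Real.rpow_le_rpow_of_exponent_le h hp
    have e : |t| ^ (2:ℝ) = t ^ 2 := by rw [← sq_abs]; exact_mod_cast Real.rpow_natCast |t| 2
    linarith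

section
variable {d : ℕ} {s p c C γ₀ γ : ℝ} {ρ v : Ed d → ℝ}

theorem sq_loc (hd : 1 ≤ d) (hp : 2 ≤ p) (hρpos : ∀ x, 0 < ρ x)
    (hw : TwoPowerWeight d ρ c C γ₀ γ) (hγ₀ : 0 ≤ γ₀) (hγ : 0 ≤ γ)
    (hv : Measurable v) (hvi : Integrable (fun x => |v x| ^ p * ρ x)) {M : ℝ} (hM : 1 ≤ M) :
    Integrable ((closedBall (0 : Ed d) M).indicator (fun x => v x ^ 2)) := by
  obtain ⟨hc, hcC, h1, h2⟩ := hw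
  have hne : ∀ᵐ x : Ed d, x ≠ 0 := by
    have : Nonempty (Fin d) := ⟨⟨0, hd⟩⟩
    exact Measure.ae_ne volume 0
  have hM0 : 0 < M := by linarith
  have hone : Integrable ((closedBall (0 : Ed d) M).indicator (fun _ => (1:ℝ))) :=
    (integrable_indicator_iff measurableSet_closedBall).2
      (continuousOn_const.integrableOn_compact (isCompact_closedBall _ _))
  refine (hone.add (hvi.const_mul (c * M ^ (-γ))⁻¹)).mono' ?_ ?_
  · exact ((hv.pow_const 2).indicator measurableSet_closedBall).aestronglyMeasurable
  · filter_upwards [h1, h2, hne] with x h1 h2 hx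
    have hx0 := norm_pos_iff.2 hx
    have hr := (hρpos x).le
    by_cases hxM : x ∈ closedBall (0 : Ed d) M
    · simp only [Pi.add_apply, indicator_of_mem hxM]
      rw [Real.norm_of_nonneg (sq_nonneg _)]
      refine (sq_le_one_add_rpow hp).trans ?_
      gcongr
      rw [mem_closedBall_zero_iff] at hxM
      have hlow : c * M ^ (-γ) ≤ ρ x := by
        rcases le_or_gt ‖x‖ 1 with hx1 | hx1
        · refine le_trans ?_ (h1 hx1).1
          gcongr
          calc M ^ (-γ) ≤ 1 := Real.rpow_le_one_of_one_le_of_nonpos hM (by linarith)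
            _ ≤ _ := Real.one_le_rpow_of_pos_of_le_one_of_nonpos hx0 hx1 (by linarith)
        · refine le_trans ?_ (h2 hx1).1
          gcongr c * ?_
          exact Real.rpow_le_rpow_of_nonpos hx0 hxM (by linarith)
      have hpos : 0 < c * M ^ (-γ) := by positivity
      rw [inv_mul_eq_div, le_div_iff₀ hpos]
      gcongr
    · simp only [Pi.add_apply, indicator_of_notMem hxM, norm_zero, zero_add]
      positivity

theorem wt_dom (hd : 1 ≤ d) (hs : s ∈ Set.Ioo (0:ℝ) 1) (hρpos : ∀ x, 0 < ρ x)
    (hw : TwoPowerWeight d ρ c C γ₀ γ) {Λ R : ℝ} (hΛ : 0 ≤ Λ) (hR : 1 ≤ R) {G : Ed d → ℝ}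
    (hG0 : ∀ x, 0 ≤ G x)
    (hG : ∀ t : ℝ, 0 ≤ t → ∀ x : Ed d, 1 < ‖x‖ →
        t ^ 2 * wt d s R x ≤ Λ * (t ^ p * ‖x‖ ^ (-γ)) + G x) {M : ℝ} (hM : 1 ≤ M) :
    ∀ᵐ x, v x ^ 2 * wt d s R x ≤ R ^ (-(2 * s)) * (closedBall (0 : Ed d) M).indicator (fun x => v x ^ 2) x
      + Λ / c * (closedBall (0 : Ed d) M)ᶜ.indicator (fun x => |v x| ^ p * ρ x) x + G x := by
  have hs0 := hs.1
  obtain ⟨hc, hcC, h1, h2⟩ := hw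
  filter_upwards [h2] with x h2
  have hr := (hρpos x).le
  by_cases hxM : x ∈ closedBall (0 : Ed d) M
  · rw [indicator_of_mem hxM, indicator_of_notMem (show x ∉ (closedBall (0 : Ed d) M)ᶜ from fun h => h hxM), mul_zero, add_zero, mul_comm]
    have : wt d s R x ≤ R ^ (-(2 * s)) := (wt_le hs hR x).trans
      (Real.rpow_le_rpow_of_nonpos (by linarith) (by linarith [norm_nonneg x]) (by linarith))
    have h3 := mul_le_mul_of_nonneg_right this (sq_nonneg (v x))
    linarith [hG0 x]
  · rw [indicator_of_notMem hxM, indicator_of_mem (show x ∈ (closedBall (0 : Ed d) M)ᶜ from hxM),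
      mul_zero, zero_add]
    rw [mem_closedBall_zero_iff, not_le] at hxM
    have hx1 : 1 < ‖x‖ := by linarith
    have := hG |v x| (abs_nonneg _) x hx1
    rw [sq_abs] at this
    refine this.trans ?_
    have h3 := (h2 hx1).1
    have h4 : Λ * (|v x| ^ p * ‖x‖ ^ (-γ)) ≤ Λ / c * (|v x| ^ p * ρ x) := by
      rw [div_mul_eq_mul_div, mul_div_assoc]
      refine mul_le_mul_of_nonneg_left ?_ hΛ
      rw [le_div_iff₀ hc]
      calc _ = |v x| ^ p * (c * ‖x‖ ^ (-γ)) := by ring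
        _ ≤ _ := by gcongr
    linarith

theorem wt_int (hd : 1 ≤ d) (hs : s ∈ Set.Ioo (0:ℝ) 1) (hp : 2 ≤ p) (hρpos : ∀ x, 0 < ρ x)
    (hw : TwoPowerWeight d ρ c C γ₀ γ) (hγ₀ : 0 ≤ γ₀)
    (hγ : γ ∈ Set.Icc (0:ℝ) ((d:ℝ) - (p / 2) * ((d:ℝ) - 2 * s)))
    (hv : Measurable v) (hvi : Integrable (fun x => |v x| ^ p * ρ x)) {R : ℝ} (hR : 1 ≤ R) :
    Integrable (fun x => v x ^ 2 * wt d s R x) := by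
  obtain ⟨Λ, hΛ, h⟩ := young_tail hd hs hp hγ one_pos
  obtain ⟨G, hG0, hGi, -, hG⟩ := h R hR
  have hdom := wt_dom (v := v) hd hs hρpos hw hΛ hR hG0 hG le_rfl
  refine ((((sq_loc hd hp hρpos hw hγ₀ hγ.1 hv hvi le_rfl).const_mul (R ^ (-(2 * s)))).add
    ((hvi.indicator (measurableSet_closedBall (x := (0 : Ed d)) (ε := 1)).compl).const_mul (Λ / c))).add hGi).mono' ?_ ?_
  · exact ((hv.pow_const 2).mul wt_meas).aestronglyMeasurable
  · filter_upwards [hdom] with x hx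
    rw [Real.norm_of_nonneg (mul_nonneg (sq_nonneg _) (wt_nonneg hR x))]
    exact hx

theorem wt_tendsto (hd : 1 ≤ d) (hs : s ∈ Set.Ioo (0:ℝ) 1) (hp : 2 ≤ p) (hρpos : ∀ x, 0 < ρ x)
    (hw : TwoPowerWeight d ρ c C γ₀ γ) (hγ₀ : 0 ≤ γ₀)
    (hγ : γ ∈ Set.Icc (0:ℝ) ((d:ℝ) - (p / 2) * ((d:ℝ) - 2 * s)))
    (hv : Measurable v) (hvi : Integrable (fun x => |v x| ^ p * ρ x)) :
    Tendsto (fun n : ℕ => ∫ x, v x ^ 2 * wt d s ((n:ℝ) + 1) x) atTop (𝓝 0) := by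
  have hs0 := hs.1
  have hc := hw.1
  have htail : Tendsto (fun n : ℕ => ∫ x, (closedBall (0 : Ed d) ((n:ℝ) + 1))ᶜ.indicator
      (fun x => |v x| ^ p * ρ x) x) atTop (𝓝 0) := by
    have := tendsto_integral_of_dominated_convergence (F := fun n : ℕ =>
      (closedBall (0 : Ed d) ((n:ℝ) + 1))ᶜ.indicator (fun x => |v x| ^ p * ρ x)) (f := fun _ => (0:ℝ))
      (μ := volume) (fun x => ‖|v x| ^ p * ρ x‖)
      (fun n => (hvi.indicator measurableSet_closedBall.compl).1) hvi.norm
      (fun n => Eventually.of_forall fun x => norm_indicator_le_norm_self _ _)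
      (Eventually.of_forall fun x => ?_)
    · simpa using this
    · refine tendsto_const_nhds.congr' ?_
      filter_upwards [tendsto_natCast_atTop_atTop.eventually_ge_atTop ‖x‖] with n hn
      rw [indicator_of_notMem]
      intro h; apply h
      rw [mem_closedBall_zero_iff]; linarith
  rw [Metric.tendsto_atTop]
  intro δ hδ
  obtain ⟨Λ, hΛ, h⟩ := young_tail hd hs hp hγ (δ := δ / 4) (by positivity)
  have ht2 := htail.const_mul (Λ / c)
  rw [mul_zero] at ht2
  obtain ⟨m, hm⟩ := (ht2.eventually (eventually_lt_nhds (show 0 < δ / 4 by positivity))).exists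
  set M : ℝ := (m:ℝ) + 1 with hMdef
  have hM : 1 ≤ M := by rw [hMdef]; linarith [(Nat.cast_nonneg m : (0:ℝ) ≤ m)]
  set S := ∫ x, (closedBall (0 : Ed d) M).indicator (fun x => v x ^ 2) x with hS
  have hR0 : Tendsto (fun n : ℕ => ((n:ℝ) + 1) ^ (-(2 * s)) * S) atTop (𝓝 0) := by
    have := ((tendsto_rpow_neg_atTop (show 0 < 2 * s by positivity)).comp
      (tendsto_atTop_add_const_right _ (1:ℝ) tendsto_natCast_atTop_atTop)).mul_const S
    simpa using this
  obtain ⟨N, hN⟩ := eventually_atTop.1 (hR0.eventually (eventually_lt_nhds (show 0 < δ / 4 by positivity)))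
  refine ⟨N, fun n hn => ?_⟩
  have hR : 1 ≤ (n:ℝ) + 1 := by linarith [(Nat.cast_nonneg n : (0:ℝ) ≤ n)]
  obtain ⟨G, hG0, hGi, hGδ, hG⟩ := h ((n:ℝ) + 1) hR
  have hdom := wt_dom (v := v) hd hs hρpos hw hΛ hR hG0 hG hM
  have i1 := (sq_loc hd hp hρpos hw hγ₀ hγ.1 hv hvi hM).const_mul (((n:ℝ) + 1) ^ (-(2 * s)))
  have i2 := (hvi.indicator (measurableSet_closedBall (x := (0 : Ed d)) (ε := M)).compl).const_mul (Λ / c)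
  have hle := integral_mono_ae (wt_int hd hs hp hρpos hw hγ₀ hγ hv hvi hR) ((i1.add i2).add hGi) hdom
  have i12 := i1.add i2
  rw [integral_add' i12 hGi, integral_add' i1 i2, integral_const_mul, integral_const_mul] at hle
  rw [Real.dist_eq, sub_zero, abs_of_nonneg (integral_nonneg fun x =>
    mul_nonneg (sq_nonneg _) (wt_nonneg hR x))]
  linarith [hN n hn]

theorem v_int (hd : 1 ≤ d) (hs : s ∈ Set.Ioo (0:ℝ) 1) (hv : Measurable v)
    (h : Integrable (fun x => v x ^ 2 * wt d s 1 x)) :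
    Integrable (fun x => |v x| * (1 + ‖x‖) ^ (-((d:ℝ) + 2 * s))) := by
  have hs0 := hs.1
  have hI : Integrable (fun z : Ed d => (1 + ‖z‖) ^ (-((d:ℝ) + 2 * s))) :=
      integrable_one_add_norm (by rw [finrank_euclideanSpace_fin]; linarith)
  refine (hI.add h).mono' ?_ ?_
  · exact Measurable.aestronglyMeasurable (by fun_prop)
  · refine Eventually.of_forall fun x => ?_
    simp only [Pi.add_apply, wt, one_pow, one_mul]
    rw [Real.norm_of_nonneg (by positivity)]
    have h1 : |v x| ≤ 1 + v x ^ 2 := by rw [← sq_abs]; nlinarith [sq_nonneg (|v x| - 1), abs_nonneg (v x)]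
    calc _ ≤ (1 + v x ^ 2) * (1 + ‖x‖) ^ (-((d:ℝ) + 2 * s)) := by gcongr
      _ = _ := by ring

theorem v_loc (hv : Measurable v)
    (h : ∀ M : ℝ, 1 ≤ M → Integrable ((closedBall (0 : Ed d) M).indicator (fun x => v x ^ 2))) :
    LocallyIntegrable v := by
  rw [locallyIntegrable_iff]
  intro k hk
  obtain ⟨r, hr⟩ := hk.isBounded.subset_closedBall (0 : Ed d)
  have h1 := (integrable_indicator_iff measurableSet_closedBall).1 (h (max r 1) (le_max_right _ _))
  refine IntegrableOn.mono_set ?_ (hr.trans (closedBall_subset_closedBall (le_max_left _ 1)))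
  have hone : IntegrableOn (fun _ => (1:ℝ)) (closedBall (0 : Ed d) (max r 1)) :=
    continuousOn_const.integrableOn_compact (isCompact_closedBall _ _)
  refine (hone.add h1).mono' hv.aestronglyMeasurable ?_
  refine Eventually.of_forall fun x => ?_
  simp only [Pi.add_apply, Real.norm_eq_abs]
  rw [← sq_abs]; nlinarith [sq_nonneg (|v x| - 1), abs_nonneg (v x)]

end
end FL

namespace FL

theorem young_w {p δ : ℝ} (hp : 2 ≤ p) (hδ : 0 < δ) :
    ∃ Λ : ℝ, 0 ≤ Λ ∧ ∀ V t r : ℝ, 0 < r →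
      |V * t| ≤ δ * (|V| ^ (p / (p - 1)) * r ^ (-(p / (p - 1) - 1))) + Λ * (|t| ^ p * r) := by
  have hp0 : 0 < p := by linarith
  have hp1 : 0 < p - 1 := by linarith
  obtain ⟨q, hq⟩ : ∃ q, q = p / (p - 1) := ⟨_, rfl⟩
  have hq0 : 0 < q := by rw [hq]; positivity
  have hconj : q.HolderConjugate p := by
    refine Real.HolderConjugate.symm ?_
    rw [Real.holderConjugate_iff]
    refine ⟨by linarith, ?_⟩
    rw [hq]; field_simp; ring
  have hpq : (1 / p) * q = q - 1 := by rw [hq]; field_simp; ring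
  obtain ⟨lam, hlam⟩ : ∃ lam, lam = δ ^ (1 / q) := ⟨_, rfl⟩
  have hlam0 : 0 < lam := by rw [hlam]; positivity
  have hlamq : lam ^ q = δ := by
    rw [hlam, ← Real.rpow_mul hδ.le, one_div, inv_mul_cancel₀ hq0.ne', Real.rpow_one]
  refine ⟨(lam⁻¹) ^ p, by positivity, fun V t r hr => ?_⟩
  rw [← hq]
  have hrr : r ^ (-(1 / p)) * r ^ (1 / p) = 1 := by rw [← Real.rpow_add hr]; simp
  have h := Real.young_inequality_of_nonneg (a := lam * (|V| * r ^ (-(1 / p))))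
    (b := lam⁻¹ * (|t| * r ^ (1 / p))) (by positivity) (by positivity) hconj
  have e : lam * (|V| * r ^ (-(1 / p))) * (lam⁻¹ * (|t| * r ^ (1 / p))) = |V * t| := by
    calc _ = (lam * lam⁻¹) * (|V| * |t|) * (r ^ (-(1 / p)) * r ^ (1 / p)) := by ring
      _ = _ := by rw [hrr, mul_inv_cancel₀ hlam0.ne', abs_mul]; ring
  rw [e] at h
  refine h.trans (add_le_add ?_ ?_)
  · refine (div_le_self (by positivity) hconj.lt.le).trans (le_of_eq ?_)
    rw [Real.mul_rpow hlam0.le (by positivity), Real.mul_rpow (by positivity) (by positivity),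
      ← Real.rpow_mul hr.le, neg_mul, hpq, hlamq]
  · refine (div_le_self (by positivity) hconj.symm.lt.le).trans (le_of_eq ?_)
    rw [Real.mul_rpow (by positivity) (by positivity), Real.mul_rpow (by positivity) (by positivity),
      ← Real.rpow_mul hr.le, one_div, inv_mul_cancel₀ hp0.ne', Real.rpow_one]

section
variable {d : ℕ} {s p c C γ₀ γ : ℝ} {ρ v V : Ed d → ℝ}

theorem pair_w (hρpos : ∀ x, 0 < ρ x) {Λ δ : ℝ}
    (hy : ∀ V t r : ℝ, 0 < r →
      |V * t| ≤ δ * (|V| ^ (p / (p - 1)) * r ^ (-(p / (p - 1) - 1))) + Λ * (|t| ^ p * r))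
    (hV : Measurable V)
    (hVi : Integrable (fun x => |V x| ^ (p / (p - 1)) * ρ x ^ (-(p / (p - 1) - 1))))
    {φ : Ed d → ℝ} (hφ : Measurable φ) (hφi : Integrable (fun x => |φ x| ^ p * ρ x)) :
    Integrable (fun x => V x * φ x) ∧ ∫ x, |V x * φ x| ≤
      δ * (∫ x, |V x| ^ (p / (p - 1)) * ρ x ^ (-(p / (p - 1) - 1))) + Λ * ∫ x, |φ x| ^ p * ρ x := by
  have hi := (hVi.const_mul δ).add (hφi.const_mul Λ)
  have hI : Integrable (fun x => V x * φ x) := by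
    refine hi.mono' (hV.mul hφ).aestronglyMeasurable (Eventually.of_forall fun x => ?_)
    exact hy _ _ _ (hρpos x)
  refine ⟨hI, ?_⟩
  have := integral_mono hI.abs hi (fun x => hy (V x) (φ x) (ρ x) (hρpos x))
  rwa [integral_add' (hVi.const_mul δ) (hφi.const_mul Λ), integral_const_mul, integral_const_mul] at this

theorem rho_loc (hd : 1 ≤ d) (hρpos : ∀ x, 0 < ρ x) (hρm : Measurable ρ)
    (hw : TwoPowerWeight d ρ c C γ₀ γ) (hγ₀ : γ₀ ∈ Set.Ico (0:ℝ) d) (hγ : 0 ≤ γ) (M : ℝ) :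
    IntegrableOn ρ (closedBall (0 : Ed d) M) := by
  obtain ⟨hc, hcC, h1, h2⟩ := hw
  have i1 := (pow_integrable_ball hd hγ₀.2 M).const_mul C
  have i2 : IntegrableOn (fun _ : Ed d => C) (closedBall (0 : Ed d) M) :=
    continuousOn_const.integrableOn_compact (isCompact_closedBall _ _)
  refine (i1.add i2).mono' hρm.aestronglyMeasurable (ae_restrict_of_ae ?_)
  filter_upwards [h1, h2] with x h1 h2
  have hC0 : 0 < C := hc.trans hcC
  have hn : 0 ≤ C * ‖x‖ ^ (-γ₀) := by positivity
  rw [Real.norm_of_nonneg (hρpos x).le]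
  simp only [Pi.add_apply]
  rcases le_or_gt ‖x‖ 1 with hx | hx
  · linarith [(h1 hx).2]
  · have : ‖x‖ ^ (-γ) ≤ 1 := Real.rpow_le_one_of_one_le_of_nonpos hx.le (by linarith)
    have := mul_le_mul_of_nonneg_left this hC0.le
    linarith [(h2 hx).2]

theorem mo_w (b : ContDiffBump (0 : Ed d)) {f m : Ed d → ℝ} (hf : Measurable f)
    (hfl : LocallyIntegrable f) {q : ℝ} (hq : 1 ≤ q) (hm : Measurable m) (hm0 : ∀ x, 0 ≤ m x)
    {D : ℝ} (hD : 0 ≤ D)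
    (hA : ∀ᵐ x, ∫⁻ y, ENNReal.ofReal (b.normed volume y) * ENNReal.ofReal (m (x + y))
        ≤ ENNReal.ofReal D * ENNReal.ofReal (m x))
    (hfi : Integrable (fun x => |f x| ^ q * m x)) :
    Integrable (fun x => |mo b f x| ^ q * m x) ∧
      ∫ x, |mo b f x| ^ q * m x ≤ D * ∫ x, |f x| ^ q * m x := by
  have hmo : Measurable (mo b f) := (mo_smooth b hfl).continuous.measurable
  have key : ∀ g : Ed d → ℝ, ∫⁻ x, ‖g x‖ₑ ^ q * ENNReal.ofReal (m x)
      = ∫⁻ x, ENNReal.ofReal (|g x| ^ q * m x) := by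
    intro g
    refine lintegral_congr fun x => ?_
    rw [ENNReal.ofReal_mul (by positivity), ← ENNReal.ofReal_rpow_of_nonneg (abs_nonneg _) (by linarith),
      Real.enorm_eq_ofReal_abs]
  have h0 : ∀ g : Ed d → ℝ, ∀ x, 0 ≤ |g x| ^ q * m x := fun g x =>
    mul_nonneg (by positivity) (hm0 x)
  have h := mo_weight b hf hq hm.ennreal_ofReal hA
  rw [key, key, ← ofReal_integral_eq_lintegral_ofReal hfi (Eventually.of_forall (h0 f)),
    ← ENNReal.ofReal_mul hD] at h
  have hms : AEStronglyMeasurable (fun x => |mo b f x| ^ q * m x) volume :=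
    Measurable.aestronglyMeasurable (by fun_prop)
  have hI : Integrable (fun x => |mo b f x| ^ q * m x) :=
    (lintegral_ofReal_ne_top_iff_integrable hms (Eventually.of_forall (h0 _))).1
      (ne_top_of_le_ne_top ENNReal.ofReal_ne_top h)
  refine ⟨hI, ?_⟩
  rw [← ofReal_integral_eq_lintegral_ofReal hI (Eventually.of_forall (h0 _))] at h
  exact (ENNReal.ofReal_le_ofReal_iff (mul_nonneg hD (integral_nonneg (h0 f)))).1 h

theorem T_w (b : ContDiffBump (0 : Ed d)) {f m χ : Ed d → ℝ} (hf : Measurable f)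
    (hfl : LocallyIntegrable f) {q : ℝ} (hq : 1 ≤ q) (hm : Measurable m) (hm0 : ∀ x, 0 ≤ m x)
    {D : ℝ} (hD : 0 ≤ D)
    (hA : ∀ᵐ x, ∫⁻ y, ENNReal.ofReal (b.normed volume y) * ENNReal.ofReal (m (x + y))
        ≤ ENNReal.ofReal D * ENNReal.ofReal (m x))
    (hfi : Integrable (fun x => |f x| ^ q * m x))
    (hχ : Continuous χ) (hχ0 : ∀ x, 0 ≤ χ x) (hχ1 : ∀ x, χ x ≤ 1) :
    Integrable (fun x => |mo b (fun y => χ y * mo b f y) x| ^ q * m x) ∧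
      ∫ x, |mo b (fun y => χ y * mo b f y) x| ^ q * m x ≤ D * (D * ∫ x, |f x| ^ q * m x) := by
  obtain ⟨h1, h2⟩ := mo_w b hf hfl hq hm hm0 hD hA hfi
  have hcm : Continuous (mo b f) := (mo_smooth b hfl).continuous
  have hle : ∀ x, |χ x * mo b f x| ^ q * m x ≤ |mo b f x| ^ q * m x := by
    intro x
    refine mul_le_mul_of_nonneg_right ?_ (hm0 x)
    refine Real.rpow_le_rpow (abs_nonneg _) ?_ (by linarith)
    rw [abs_mul, abs_of_nonneg (hχ0 x)]
    exact mul_le_of_le_one_left (abs_nonneg _) (hχ1 x)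
  have h3 : Integrable (fun x => |χ x * mo b f x| ^ q * m x) := by
    refine h1.mono' ?_ (Eventually.of_forall fun x => ?_)
    · have := hcm.measurable
      have := hχ.measurable
      exact Measurable.aestronglyMeasurable (by fun_prop)
    · rw [Real.norm_of_nonneg (mul_nonneg (by positivity) (hm0 x))]; exact hle x
  obtain ⟨h4, h5⟩ := mo_w b (f := fun y => χ y * mo b f y) (hχ.mul hcm).measurable
    (hχ.mul hcm).locallyIntegrable hq hm hm0 hD hA h3
  refine ⟨h4, h5.trans (mul_le_mul_of_nonneg_left ?_ hD)⟩
  exact (integral_mono h3 h1 hle).trans h2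

theorem mo_sup (b : ContDiffBump (0 : Ed d)) {f : Ed d → ℝ} {S : ℝ} (hS : ∀ x, |f x| ≤ S) (x : Ed d) :
    |mo b f x| ≤ S := by
  rw [mo_apply]
  have hi : Integrable (fun t => b.normed volume t * S) := b.integrable_normed.mul_const S
  have := norm_integral_le_of_norm_le hi (f := fun t => b.normed volume t * f (x - t))
    (Eventually.of_forall fun t => by
      rw [Real.norm_eq_abs, abs_mul, abs_of_nonneg (b.nonneg_normed t)]
      exact mul_le_mul_of_nonneg_left (hS _) (b.nonneg_normed t))
  rwa [integral_mul_const, b.integral_normed, one_mul] at this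

theorem mo_supp (b : ContDiffBump (0 : Ed d)) (hb : b.rOut ≤ 1) {f : Ed d → ℝ} {M : ℝ}
    (hf : ∀ x, M < ‖x‖ → f x = 0) (x : Ed d) (hx : M + 1 < ‖x‖) : mo b f x = 0 := by
  rw [mo_apply]
  refine integral_eq_zero_of_ae (Eventually.of_forall fun t => ?_)
  by_cases ht : b.normed volume t = 0
  · simp [ht]
  · have ht' : t ∈ Function.support (b.normed volume) := ht
    rw [b.support_normed_eq, mem_ball_zero_iff] at ht'
    have : f (x - t) = 0 := hf _ (by have := norm_sub_norm_le x t; linarith)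
    simp [this]

theorem mo_add (b : ContDiffBump (0 : Ed d)) {f g : Ed d → ℝ} (hf : LocallyIntegrable f)
    (hg : LocallyIntegrable g) (x : Ed d) : mo b (fun y => f y + g y) x = mo b f x + mo b g x := by
  rw [mo_apply, mo_apply, mo_apply, ← integral_add (mo_int b hf x) (mo_int b hg x)]
  refine integral_congr_ae (Eventually.of_forall fun t => ?_)
  simp only []; ring

noncomputable def bn (d : ℕ) (n : ℕ) : ContDiffBump (0 : Ed d) where
  rIn := 1 / (2 * ((n:ℝ) + 1))
  rOut := 1 / ((n:ℝ) + 1)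
  rIn_pos := by positivity
  rIn_lt_rOut := by
    apply one_div_lt_one_div_of_lt <;> nlinarith [(Nat.cast_nonneg n : (0:ℝ) ≤ n)]

theorem bn_le2 (n : ℕ) : (bn d n).rOut ≤ 2 * (bn d n).rIn := by
  simp only [bn]; apply le_of_eq; field_simp

theorem bn_le1 (n : ℕ) : (bn d n).rOut ≤ 1 := by
  simp only [bn]
  rw [div_le_one (by positivity)]; linarith [(Nat.cast_nonneg n : (0:ℝ) ≤ n)]

theorem bn_tendsto : Tendsto (fun n => (bn d n).rOut) atTop (𝓝 0) :=
  tendsto_one_div_add_atTop_nhds_zero_nat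

theorem T_tendsto_cont {g χ : Ed d → ℝ} (hg : Continuous g) (hχ : Continuous χ) (x : Ed d) :
    Tendsto (fun n => mo (bn d n) (fun y => χ y * mo (bn d n) g y) x) atTop (𝓝 (χ x * g x)) := by
  refine ContDiffBump.convolution_tendsto_right (μ := volume) (φ := bn d)
    (g := fun n y => χ y * mo (bn d n) g y) (k := fun _ => x) bn_tendsto ?_ ?_ tendsto_const_nhds
  · exact Eventually.of_forall fun n =>
      (hχ.mul (mo_smooth (bn d n) hg.locallyIntegrable).continuous).aestronglyMeasurable
  · have h1 : Tendsto (fun q : ℕ × Ed d => χ q.2) (atTop ×ˢ 𝓝 x) (𝓝 (χ x)) :=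
      (hχ.tendsto x).comp tendsto_snd
    have h2 : Tendsto (fun q : ℕ × Ed d => mo (bn d q.1) g q.2) (atTop ×ˢ 𝓝 x) (𝓝 (g x)) :=
      ContDiffBump.convolution_tendsto_right (μ := volume) (φ := fun q : ℕ × Ed d => bn d q.1)
        (g := fun _ => g) (k := fun q => q.2) (bn_tendsto.comp tendsto_fst)
        (Eventually.of_forall fun _ => hg.aestronglyMeasurable)
        ((hg.tendsto x).comp tendsto_snd) tendsto_snd
    exact h1.mul h2

theorem VT_tendsto_cont {g χ : Ed d → ℝ} (hg : Continuous g) (hgc : HasCompactSupport g)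
    (hχ : Continuous χ) (hχc : HasCompactSupport χ) (hχ0 : ∀ x, 0 ≤ χ x) (hχ1 : ∀ x, χ x ≤ 1)
    (hV : Measurable V)
    (hVl : ∀ M : ℝ, Integrable (fun x => V x * (closedBall (0 : Ed d) M).indicator (fun _ => (1:ℝ)) x)) :
    Tendsto (fun n => ∫ x, V x * mo (bn d n) (fun y => χ y * mo (bn d n) g y) x) atTop
      (𝓝 (∫ x, V x * (χ x * g x))) := by
  obtain ⟨S, hS⟩ := hgc.exists_bound_of_continuous hg
  obtain ⟨M, hM⟩ := hχc.isCompact.isBounded.subset_closedBall (0 : Ed d)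
  have hsup : ∀ n x, |mo (bn d n) (fun y => χ y * mo (bn d n) g y) x| ≤ S := by
    intro n x
    refine mo_sup _ (fun y => ?_) x
    rw [abs_mul, abs_of_nonneg (hχ0 y)]
    exact (mul_le_of_le_one_left (abs_nonneg _) (hχ1 y)).trans (mo_sup _ hS y)
  have hz : ∀ n x, M + 1 < ‖x‖ → mo (bn d n) (fun y => χ y * mo (bn d n) g y) x = 0 := by
    intro n x hx
    refine mo_supp _ (bn_le1 n) (M := M) (fun y hy => ?_) x hx
    have : χ y = 0 := by
      by_contra h
      have := hM (subset_tsupport _ h)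
      rw [mem_closedBall_zero_iff] at this; linarith
    simp [this]
  refine tendsto_integral_of_dominated_convergence
    (fun x => S * |V x * (closedBall (0 : Ed d) (M + 1)).indicator (fun _ => (1:ℝ)) x|) ?_
    ((hVl (M + 1)).abs.const_mul S) ?_ ?_
  · intro n
    have := (mo_smooth (bn d n) (f := fun y => χ y * mo (bn d n) g y)
      (hχ.mul (mo_smooth (bn d n) hg.locallyIntegrable).continuous).locallyIntegrable).continuous.measurable
    exact (hV.mul this).aestronglyMeasurable
  · intro n
    refine Eventually.of_forall fun x => ?_
    by_cases hx : x ∈ closedBall (0 : Ed d) (M + 1)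
    · rw [indicator_of_mem hx, mul_one, Real.norm_eq_abs, abs_mul, mul_comm]
      exact mul_le_mul_of_nonneg_right (hsup n x) (abs_nonneg _)
    · rw [indicator_of_notMem hx, hz n x (by rwa [mem_closedBall_zero_iff, not_le] at hx)]
      simp
  · exact Eventually.of_forall fun x => (T_tendsto_cont hg hχ x).const_mul _

theorem dens (hp : 2 ≤ p) (hρpos : ∀ x, 0 < ρ x) (hρm : Measurable ρ)
    (hρl : ∀ M : ℝ, IntegrableOn ρ (closedBall (0 : Ed d) M))
    (hv : Measurable v) (hvi : Integrable (fun x => |v x| ^ p * ρ x)) {ε : ℝ} (hε : 0 < ε) :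
    ∃ g : Ed d → ℝ, Continuous g ∧ HasCompactSupport g ∧
      Integrable (fun x => |v x - g x| ^ p * ρ x) ∧ Integrable (fun x => |g x| ^ p * ρ x) ∧
      ∫ x, |v x - g x| ^ p * ρ x ≤ ε := by
  have hp0 : 0 < p := by linarith
  set μ : Measure (Ed d) := volume.withDensity (fun x => ((ρ x).toNNReal : ℝ≥0∞)) with hμ
  have hρn : Measurable (fun x => (ρ x).toNNReal) := hρm.real_toNNReal
  have hconv : ∀ f : Ed d → ℝ, Integrable f μ ↔ Integrable (fun x => f x * ρ x) := by
    intro f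
    rw [hμ, integrable_withDensity_iff_integrable_smul hρn]
    refine integrable_congr (Eventually.of_forall fun x => ?_)
    simp [NNReal.smul_def, Real.coe_toNNReal _ (hρpos x).le, mul_comm]
  have hconv2 : ∀ f : Ed d → ℝ, ∫ x, f x ∂μ = ∫ x, f x * ρ x := by
    intro f
    rw [hμ, integral_withDensity_eq_integral_smul hρn]
    refine integral_congr_ae (Eventually.of_forall fun x => ?_)
    simp [NNReal.smul_def, Real.coe_toNNReal _ (hρpos x).le, mul_comm]
  have hfin : IsLocallyFiniteMeasure μ := by
    refine ⟨fun x => ⟨closedBall 0 (‖x‖ + 1), ?_, ?_⟩⟩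
    · refine mem_of_superset (ball_mem_nhds x one_pos) fun y hy => ?_
      rw [mem_closedBall_zero_iff]
      rw [mem_ball, dist_eq_norm] at hy
      have := norm_sub_norm_le y x; linarith
    · rw [hμ, withDensity_apply _ measurableSet_closedBall]
      have := (hρl (‖x‖ + 1)).lintegral_lt_top
      exact this
  have hmem : ∀ f : Ed d → ℝ, AEStronglyMeasurable f μ →
      (MemLp f (ENNReal.ofReal p) μ ↔ Integrable (fun x => |f x| ^ p * ρ x)) := by
    intro f hf
    rw [← hconv, ← integrable_norm_rpow_iff hf (by simpa using hp0) ENNReal.ofReal_ne_top,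
      ENNReal.toReal_ofReal hp0.le]
    rfl
  have hvL : MemLp v (ENNReal.ofReal p) μ := (hmem v hv.aestronglyMeasurable).2 hvi
  obtain ⟨g, hgc, hle, hg, hgL⟩ := hvL.exists_hasCompactSupport_integral_rpow_sub_le hp0 hε
  refine ⟨g, hg, hgc, (hmem _ (hv.sub hg.measurable).aestronglyMeasurable).1 (hvL.sub hgL),
    (hmem _ hg.aestronglyMeasurable).1 hgL, ?_⟩
  rw [hconv2] at hle
  exact hle

theorem VT_tendsto (hd : 1 ≤ d) (hp : 2 ≤ p) (hρpos : ∀ x, 0 < ρ x) (hρm : Measurable ρ)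
    (hw : TwoPowerWeight d ρ c C γ₀ γ) (hγ₀ : γ₀ ∈ Set.Ico (0:ℝ) d) (hγ : 0 ≤ γ)
    (hv : Measurable v) (hvl : LocallyIntegrable v) (hvi : Integrable (fun x => |v x| ^ p * ρ x))
    (hV : Measurable V)
    (hVi : Integrable (fun x => |V x| ^ (p / (p - 1)) * ρ x ^ (-(p / (p - 1) - 1))))
    {χ : Ed d → ℝ} (hχ : Continuous χ) (hχc : HasCompactSupport χ) (hχ0 : ∀ x, 0 ≤ χ x)
    (hχ1 : ∀ x, χ x ≤ 1) :
    Tendsto (fun n => ∫ x, V x * mo (bn d n) (fun y => χ y * mo (bn d n) v y) x) atTop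
      (𝓝 (∫ x, V x * (χ x * v x))) := by
  have hp0 : 0 < p := by linarith
  have hp1 : 1 ≤ p := by linarith
  have hρl := rho_loc hd hρpos hρm hw hγ₀ hγ
  obtain ⟨D, hD, hA⟩ := A1_rho hd hw hγ₀
  have hA' := fun n => hA (bn d n) (bn_le2 n) (bn_le1 n)
  have hVl : ∀ M : ℝ, Integrable
      (fun x => V x * (closedBall (0 : Ed d) M).indicator (fun _ => (1:ℝ)) x) := by
    intro M
    obtain ⟨Λ, -, hy⟩ := young_w hp one_pos
    refine (pair_w hρpos hy hV hVi (measurable_const.indicator measurableSet_closedBall) ?_).1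
    refine ((integrable_indicator_iff measurableSet_closedBall).2 (hρl M)).congr
      (Eventually.of_forall fun x => ?_)
    by_cases hx : x ∈ closedBall (0 : Ed d) M
    · simp [indicator_of_mem hx]
    · simp [indicator_of_notMem hx, Real.zero_rpow hp0.ne']
  set A := ∫ x, |V x| ^ (p / (p - 1)) * ρ x ^ (-(p / (p - 1) - 1)) with hAdef
  have hA0 : 0 ≤ A := integral_nonneg fun x =>
    mul_nonneg (by positivity) (Real.rpow_nonneg (hρpos x).le _)
  rw [Metric.tendsto_atTop]
  intro ε hε
  obtain ⟨Λ, hΛ, hy⟩ := young_w (δ := ε / (8 * (A + 1))) hp (by positivity)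
  have hδA : ε / (8 * (A + 1)) * A ≤ ε / 8 := by
    rw [div_mul_eq_mul_div, div_le_div_iff₀ (by positivity) (by positivity)]
    nlinarith
  obtain ⟨η, hη⟩ : ∃ η, η = ε / (8 * (Λ + 1) * (D * D + 1)) := ⟨_, rfl⟩
  have hη0 : 0 < η := by rw [hη]; positivity
  have hηe : (Λ + 1) * (D * D + 1) * η = ε / 8 := by rw [hη]; field_simp
  obtain ⟨g, hg, hgc, hvgi, hgi, hvg⟩ := dens hp hρpos hρm hρl hv hvi hη0
  have hgl := hg.locallyIntegrable (μ := volume)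
  have hfm : Measurable (fun x => v x - g x) := hv.sub hg.measurable
  have hfl : LocallyIntegrable (fun x => v x - g x) := hvl.sub hgl
  have hlim := VT_tendsto_cont hg hgc hχ hχc hχ0 hχ1 hV hVl
  rw [Metric.tendsto_atTop] at hlim
  obtain ⟨N, hN⟩ := hlim (ε / 4) (by positivity)
  have hI0 : 0 ≤ ∫ x, |v x - g x| ^ p * ρ x := integral_nonneg fun x =>
    mul_nonneg (by positivity) (hρpos x).le
  -- the term with `χ (v - g)`
  have hχle : ∀ f : Ed d → ℝ, ∀ x, |χ x * f x| ^ p * ρ x ≤ |f x| ^ p * ρ x := by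
    intro f x
    refine mul_le_mul_of_nonneg_right ?_ (hρpos x).le
    refine Real.rpow_le_rpow (abs_nonneg _) ?_ (by linarith)
    rw [abs_mul, abs_of_nonneg (hχ0 x)]
    exact mul_le_of_le_one_left (abs_nonneg _) (hχ1 x)
  have hχi : ∀ f : Ed d → ℝ, Measurable f → Integrable (fun x => |f x| ^ p * ρ x) →
      Integrable (fun x => |χ x * f x| ^ p * ρ x) := by
    intro f hf hfi
    refine hfi.mono' ?_ (Eventually.of_forall fun x => ?_)
    · have := hχ.measurable
      exact Measurable.aestronglyMeasurable (by fun_prop)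
    · rw [Real.norm_of_nonneg (mul_nonneg (by positivity) (hρpos x).le)]; exact hχle f x
  obtain ⟨j1, j2⟩ := pair_w (φ := fun x => χ x * (v x - g x)) hρpos hy hV hVi (hχ.measurable.mul hfm) (hχi _ hfm hvgi)
  obtain ⟨j3, -⟩ := pair_w (φ := fun x => χ x * g x) hρpos hy hV hVi (hχ.measurable.mul hg.measurable) (hχi _ hg.measurable hgi)
  have j4 : ∫ x, |χ x * (v x - g x)| ^ p * ρ x ≤ η :=
    (integral_mono (hχi _ hfm hvgi) hvgi (hχle _)).trans hvg
  have e1 : ∫ x, V x * (χ x * v x) = (∫ x, V x * (χ x * (v x - g x))) + ∫ x, V x * (χ x * g x) := by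
    rw [← integral_add j1 j3]
    refine integral_congr_ae (Eventually.of_forall fun x => ?_)
    simp only []; ring
  have b1 : |∫ x, V x * (χ x * (v x - g x))| ≤ ε / 4 := by
    refine (abs_integral_le_integral_abs).trans (j2.trans ?_)
    have : Λ * ∫ x, |χ x * (v x - g x)| ^ p * ρ x ≤ Λ * η := mul_le_mul_of_nonneg_left j4 hΛ
    have : Λ * η ≤ (Λ + 1) * (D * D + 1) * η := by
      nlinarith [mul_nonneg hΛ hη0.le, mul_nonneg (mul_nonneg hΛ (mul_nonneg hD hD)) hη0.le,
        mul_nonneg (mul_nonneg hD hD) hη0.le]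
    linarith
  refine ⟨N, fun n hn => ?_⟩
  have hgT := T_w (bn d n) hg.measurable hgl hp1 hρm (fun x => (hρpos x).le) hD (hA' n) hgi hχ hχ0 hχ1
  have hfT := T_w (bn d n) hfm hfl hp1 hρm (fun x => (hρpos x).le) hD (hA' n) hvgi hχ hχ0 hχ1
  have cg := (mo_smooth (bn d n) hgl).continuous
  have cf := (mo_smooth (bn d n) hfl).continuous
  have lg : LocallyIntegrable (fun y => χ y * mo (bn d n) g y) volume := (hχ.mul cg).locallyIntegrable (μ := volume)
  have lf : LocallyIntegrable (fun y => χ y * mo (bn d n) (fun x => v x - g x) y) volume :=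
    (hχ.mul cf).locallyIntegrable (μ := volume)
  obtain ⟨k1, k2⟩ := pair_w hρpos hy hV hVi (mo_smooth (bn d n) lf).continuous.measurable hfT.1
  obtain ⟨k3, -⟩ := pair_w hρpos hy hV hVi (mo_smooth (bn d n) lg).continuous.measurable hgT.1
  have e2 : ∫ x, V x * mo (bn d n) (fun y => χ y * mo (bn d n) v y) x =
      (∫ x, V x * mo (bn d n) (fun y => χ y * mo (bn d n) (fun x => v x - g x) y) x) +
        ∫ x, V x * mo (bn d n) (fun y => χ y * mo (bn d n) g y) x := by
    rw [← integral_add k1 k3]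
    refine integral_congr_ae (Eventually.of_forall fun x => ?_)
    simp only []
    rw [← mul_add]
    congr 1
    refine Eq.trans ?_ (mo_add (bn d n) lf lg x)
    congr 1
    funext y
    rw [← mul_add]
    congr 1
    refine Eq.trans ?_ (mo_add (bn d n) hfl hgl y)
    congr 1
    funext z
    ring
  have b2 : |∫ x, V x * mo (bn d n) (fun y => χ y * mo (bn d n) (fun x => v x - g x) y) x| ≤ ε / 4 := by
    refine (abs_integral_le_integral_abs).trans (k2.trans ?_)
    have h1 : D * (D * ∫ x, |v x - g x| ^ p * ρ x) ≤ D * (D * η) := by gcongr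
    have h2 := mul_le_mul_of_nonneg_left (hfT.2.trans h1) hΛ
    have : Λ * (D * (D * η)) ≤ (Λ + 1) * (D * D + 1) * η := by
      nlinarith [mul_nonneg hΛ hη0.le, mul_nonneg (mul_nonneg hΛ (mul_nonneg hD hD)) hη0.le,
        mul_nonneg (mul_nonneg hD hD) hη0.le]
    linarith
  have b3 := hN n hn
  rw [Real.dist_eq] at b3 ⊢
  rw [e1, e2]
  have := abs_lt.1 b3
  have := abs_le.1 b1
  have := abs_le.1 b2
  rw [abs_lt]
  constructor <;> linarith

end
end FL

namespace FL

section
variable {d : ℕ} {s p c C γ₀ γ : ℝ} {ρ v V : Ed d → ℝ}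

theorem two_ofReal (t : ℝ) : 2 * ENNReal.ofReal t = ENNReal.ofReal (2 * t) := by
  rw [ENNReal.ofReal_mul (by norm_num)]; simp

theorem NN_fatou {u χn : ℕ → Ed d → ℝ} {χ : Ed d → ℝ} {a : ℕ → ℝ} {a₀ : ℝ}
    (hu : ∀ n, Measurable (u n)) (hχn : ∀ n, Measurable (χn n))
    (hlim : ∀ᵐ x, Tendsto (fun n => u n x) atTop (𝓝 (v x)))
    (hχlim : ∀ x, Tendsto (fun n => χn n x) atTop (𝓝 (χ x)))
    (hle : ∀ n, NN d s (u n) (χn n) ≤ ENNReal.ofReal (a n)) (ha : Tendsto a atTop (𝓝 a₀)) :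
    NN d s v χ ≤ ENNReal.ofReal a₀ := by
  have hK := Kk_meas (d := d) (s := s)
  have h1 : ∀ h : Ed d, ∫⁻ x, ENNReal.ofReal (Kk d s h * ((v x - v (x + h)) ^ 2 * (χ x + χ (x + h))))
      ≤ liminf (fun n => ∫⁻ x, ENNReal.ofReal
        (Kk d s h * ((u n x - u n (x + h)) ^ 2 * (χn n x + χn n (x + h))))) atTop := by
    intro h
    have hlim' : ∀ᵐ x, Tendsto (fun n => u n (x + h)) atTop (𝓝 (v (x + h))) :=
      (measurePreserving_add_right volume h).quasiMeasurePreserving.ae hlim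
    have hF : ∀ n, Measurable (fun x => ENNReal.ofReal
        (Kk d s h * ((u n x - u n (x + h)) ^ 2 * (χn n x + χn n (x + h))))) := by
      intro n
      have := hu n
      have := hχn n
      fun_prop
    calc _ = ∫⁻ x, liminf (fun n => ENNReal.ofReal
        (Kk d s h * ((u n x - u n (x + h)) ^ 2 * (χn n x + χn n (x + h))))) atTop := by
          refine lintegral_congr_ae ?_
          filter_upwards [hlim, hlim'] with x t1 t2
          refine (Tendsto.liminf_eq ?_).symm
          refine ENNReal.tendsto_ofReal (Tendsto.const_mul _ ?_)
          exact ((t1.sub t2).pow 2).mul ((hχlim x).add (hχlim (x + h)))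
      _ ≤ _ := lintegral_liminf_le hF
  have h2 : NN d s v χ ≤ liminf (fun n => NN d s (u n) (χn n)) atTop := by
    unfold NN
    refine (lintegral_mono h1).trans (lintegral_liminf_le fun n => ?_)
    refine Measurable.lintegral_prod_right' (f := fun q : Ed d × Ed d => ENNReal.ofReal
        (Kk d s q.1 * ((u n q.2 - u n (q.2 + q.1)) ^ 2 * (χn n q.2 + χn n (q.2 + q.1))))) ?_
    have := hu n
    have := hχn n
    fun_prop
  refine h2.trans ((liminf_le_liminf (Eventually.of_forall hle)).trans ?_)
  exact ((ENNReal.tendsto_ofReal ha).liminf_eq).le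

theorem mo_sq (b : ContDiffBump (0 : Ed d)) (hb1 : b.rOut ≤ 1) (hv : Measurable v)
    (hvl : LocallyIntegrable v) {R : ℝ} (hR : 1 ≤ R)
    (hvi : Integrable (fun x => v x ^ 2 * wt d s R x)) :
    Integrable (fun x => mo b v x ^ 2 * wt d s R x) ∧
      ∫ x, mo b v x ^ 2 * wt d s R x ≤ 2 ^ |(-((d:ℝ) + 2 * s))| * ∫ x, v x ^ 2 * wt d s R x := by
  have e : ∀ t : ℝ, |t| ^ (2:ℝ) = t ^ 2 := fun t => by rw [Real.rpow_two, sq_abs]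
  have := mo_w b hv hvl (q := 2) (by norm_num) (wt_meas (s := s) (R := R)) (wt_nonneg hR)
    (D := 2 ^ |(-((d:ℝ) + 2 * s))|) (by positivity) (Eventually.of_forall (A1_wt hR b hb1))
    (by simpa only [e] using hvi)
  simpa only [e] using this

theorem step_R (hd : 1 ≤ d) (hs : s ∈ Set.Ioo (0:ℝ) 1) {Cds : ℝ} (hC : 0 < Cds) (hp : 2 ≤ p)
    (hρpos : ∀ x, 0 < ρ x) (hρm : Measurable ρ)
    (hw : TwoPowerWeight d ρ c C γ₀ γ) (hγ₀ : γ₀ ∈ Set.Ico (0:ℝ) d)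
    (hγ : γ ∈ Set.Icc (0:ℝ) ((d:ℝ) - (p / 2) * ((d:ℝ) - 2 * s)))
    (hv : Measurable v) (hvi : Integrable (fun x => |v x| ^ p * ρ x))
    (hV : Measurable V)
    (hVi : Integrable (fun x => |V x| ^ (p / (p - 1)) * ρ x ^ (-(p / (p - 1) - 1))))
    (hdist : IsDistFracLap d s Cds v V)
    {χ : Ed d → ℝ} (hχ : ContDiff ℝ (⊤ : ℕ∞) χ) (hc : HasCompactSupport χ) (hχ0 : ∀ x, 0 ≤ χ x)
    (hχ1 : ∀ x, χ x ≤ 1) {B R : ℝ} (hB : 0 ≤ B) (hR : 1 ≤ R)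
    (hW : ∀ x, ∫ h, |DD χ h x| * Kk d s h ≤ B * wt d s R x) :
    0 ≤ 4 / Cds * (∫ x, V x * (χ x * v x)) +
      B * (2 ^ |(-((d:ℝ) + 2 * s))| * ∫ x, v x ^ 2 * wt d s R x) ∧
    NN d s v χ ≤ ENNReal.ofReal (4 / Cds * (∫ x, V x * (χ x * v x)) +
      B * (2 ^ |(-((d:ℝ) + 2 * s))| * ∫ x, v x ^ 2 * wt d s R x)) := by
  have hvl : LocallyIntegrable v := v_loc hv fun M hM => sq_loc hd hp hρpos hw hγ₀.1 hγ.1 hv hvi hM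
  have w1 := wt_int hd hs hp hρpos hw hγ₀.1 hγ hv hvi le_rfl
  have wR := wt_int hd hs hp hρpos hw hγ₀.1 hγ hv hvi hR
  have hvI := v_int hd hs hv w1
  set K := B * (2 ^ |(-((d:ℝ) + 2 * s))| * ∫ x, v x ^ 2 * wt d s R x) with hK
  have key : ∀ n, 0 ≤ 4 / Cds * (∫ x, V x * mo (bn d n) (fun y => χ y * mo (bn d n) v y) x) + K ∧
      NN d s (mo (bn d n) v) χ ≤ ENNReal.ofReal
        (4 / Cds * (∫ x, V x * mo (bn d n) (fun y => χ y * mo (bn d n) v y) x) + K) := by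
    intro n
    have m1 := (mo_sq (bn d n) (bn_le1 n) hv hvl le_rfl w1).1
    have mR := mo_sq (bn d n) (bn_le1 n) hv hvl hR wR
    have e : ∀ x, mo (bn d n) v x ^ 2 * (B * wt d s R x) = B * (mo (bn d n) v x ^ 2 * wt d s R x) :=
      fun x => by ring
    have h := main_eps hd hs hC hv hvl hvI hdist hχ hc hχ0 (bn d n)
      (m1.congr (Eventually.of_forall fun x => by
        simp only [wt, one_pow, one_mul]; rw [abs_of_nonneg (sq_nonneg _)])) hW
      (by simp only [e]; exact mR.1.const_mul B)
    simp only [e, integral_const_mul] at h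
    have hle := mul_le_mul_of_nonneg_left mR.2 hB
    rw [← hK] at hle
    exact ⟨by linarith [h.1], h.2.trans (ENNReal.ofReal_le_ofReal (by linarith))⟩
  have hT := ((VT_tendsto hd hp hρpos hρm hw hγ₀ hγ.1 hv hvl hvi hV hVi hχ.continuous hc hχ0
    hχ1).const_mul (4 / Cds)).add_const K
  refine ⟨ge_of_tendsto' hT fun n => (key n).1, ?_⟩
  refine NN_fatou (u := fun n => mo (bn d n) v) (χn := fun _ => χ)
    (fun n => (mo_smooth (bn d n) hvl).continuous.measurable) (fun _ => hχ.continuous.measurable) ?_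
    (fun x => tendsto_const_nhds) (fun n => (key n).2) hT
  exact ContDiffBump.ae_convolution_tendsto_right_of_locallyIntegrable (K := 2) bn_tendsto
    (Eventually.of_forall bn_le2) hvl

theorem step_inf (hd : 1 ≤ d) (hs : s ∈ Set.Ioo (0:ℝ) 1) {Cds : ℝ} (hC : 0 < Cds) (hp : 2 ≤ p)
    (hρpos : ∀ x, 0 < ρ x) (hρm : Measurable ρ)
    (hw : TwoPowerWeight d ρ c C γ₀ γ) (hγ₀ : γ₀ ∈ Set.Ico (0:ℝ) d)
    (hγ : γ ∈ Set.Icc (0:ℝ) ((d:ℝ) - (p / 2) * ((d:ℝ) - 2 * s)))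
    (hv : Measurable v) (hvi : Integrable (fun x => |v x| ^ p * ρ x))
    (hV : Measurable V)
    (hVi : Integrable (fun x => |V x| ^ (p / (p - 1)) * ρ x ^ (-(p / (p - 1) - 1))))
    (hdist : IsDistFracLap d s Cds v V) :
    0 ≤ 4 / Cds * (∫ x, V x * v x) ∧
    NN d s v (fun _ => 1) ≤ ENNReal.ofReal (4 / Cds * (∫ x, V x * v x)) := by
  let χ : ContDiffBump (0 : Ed d) := ⟨1, 2, one_pos, one_lt_two⟩
  have hχ : ContDiff ℝ (⊤ : ℕ∞) (χ : Ed d → ℝ) := χ.contDiff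
  obtain ⟨B, hB, hBR⟩ := A_scale hd hs hχ χ.hasCompactSupport
  have hR : ∀ n : ℕ, (1:ℝ) ≤ (n:ℝ) + 1 := fun n => by linarith [(Nat.cast_nonneg n : (0:ℝ) ≤ n)]
  have hR0 : ∀ n : ℕ, ((n:ℝ) + 1)⁻¹ ≠ 0 := fun n => by positivity
  have hcs : ∀ n : ℕ, ContDiff ℝ (⊤ : ℕ∞) (fun x : Ed d => χ (((n:ℝ) + 1)⁻¹ • x)) := fun n =>
    hχ.comp (contDiff_const_smul _)
  have key := fun n : ℕ => step_R hd hs hC hp hρpos hρm hw hγ₀ hγ hv hvi hV hVi hdist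
    (χ := fun x => χ (((n:ℝ) + 1)⁻¹ • x)) (hcs n)
    (χ.hasCompactSupport.comp_smul (hR0 n)) (fun x => χ.nonneg) (fun x => χ.le_one) hB (hR n)
    (fun x => hBR _ (hR n) x)
  obtain ⟨Λ, -, hy⟩ := young_w hp one_pos
  have hVv := (pair_w hρpos hy hV hVi hv hvi).1
  have hχlim : ∀ x : Ed d, Tendsto (fun n : ℕ => χ (((n:ℝ) + 1)⁻¹ • x)) atTop (𝓝 1) := by
    intro x
    refine tendsto_const_nhds.congr' ?_
    filter_upwards [tendsto_natCast_atTop_atTop.eventually_ge_atTop ‖x‖] with n hn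
    refine (χ.one_of_mem_closedBall ?_).symm
    rw [mem_closedBall_zero_iff, norm_smul, Real.norm_of_nonneg (by positivity),
      inv_mul_le_iff₀ (by positivity)]
    change ‖x‖ ≤ ((n:ℝ) + 1) * 1
    linarith
  have t1 : Tendsto (fun n : ℕ => ∫ x, V x * (χ (((n:ℝ) + 1)⁻¹ • x) * v x)) atTop
      (𝓝 (∫ x, V x * v x)) := by
    refine tendsto_integral_of_dominated_convergence (fun x => |V x * v x|) (fun n => ?_) hVv.abs
      (fun n => Eventually.of_forall fun x => ?_) (Eventually.of_forall fun x => ?_)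
    · have := (hcs n).continuous.measurable
      exact (hV.mul (this.mul hv)).aestronglyMeasurable
    · rw [Real.norm_eq_abs, abs_mul, abs_mul, abs_mul, abs_of_nonneg χ.nonneg]
      refine mul_le_mul_of_nonneg_left ?_ (abs_nonneg _)
      exact mul_le_of_le_one_left (abs_nonneg _) χ.le_one
    · have := (((hχlim x).mul_const (v x)).const_mul (V x))
      simpa using this
  have t2 := wt_tendsto hd hs hp hρpos hw hγ₀.1 hγ hv hvi
  have t3 := (t1.const_mul (4 / Cds)).add ((t2.const_mul (2 ^ |(-((d:ℝ) + 2 * s))|)).const_mul B)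
  rw [mul_zero, mul_zero, add_zero] at t3
  refine ⟨ge_of_tendsto' t3 fun n => (key n).1, ?_⟩
  exact NN_fatou (u := fun _ => v) (fun _ => hv) (fun n => (hcs n).continuous.measurable)
    (Eventually.of_forall fun x => tendsto_const_nhds) hχlim (fun n => (key n).2) t3

theorem NN_prod (hv : Measurable v) :
    NN d s v (fun _ => 1) = 2 * ∫⁻ z : Ed d × Ed d,
      ENNReal.ofReal ((v z.1 - v z.2) ^ 2 / dist z.1 z.2 ^ ((d:ℝ) + 2 * s)) := by
  have hG : Measurable (fun z : Ed d × Ed d =>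
      ENNReal.ofReal ((v z.1 - v z.2) ^ 2 / dist z.1 z.2 ^ ((d:ℝ) + 2 * s))) := by fun_prop
  rw [Measure.volume_eq_prod, lintegral_prod _ hG.aemeasurable]
  have e : ∀ x : Ed d, ∫⁻ y, ENNReal.ofReal ((v x - v y) ^ 2 / dist x y ^ ((d:ℝ) + 2 * s))
      = ∫⁻ h, ENNReal.ofReal ((v x - v (x + h)) ^ 2 / dist x (x + h) ^ ((d:ℝ) + 2 * s)) := fun x =>
    (lintegral_add_left_eq_self (fun y => ENNReal.ofReal ((v x - v y) ^ 2 / dist x y ^ ((d:ℝ) + 2 * s))) x).symm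
  simp only [e]
  have hG2 : Measurable (fun z : Ed d × Ed d =>
      ENNReal.ofReal ((v z.1 - v (z.1 + z.2)) ^ 2 / dist z.1 (z.1 + z.2) ^ ((d:ℝ) + 2 * s))) := by
    fun_prop
  rw [lintegral_lintegral_swap (f := fun x h =>
    ENNReal.ofReal ((v x - v (x + h)) ^ 2 / dist x (x + h) ^ ((d:ℝ) + 2 * s))) hG2.aemeasurable]
  unfold NN
  rw [← lintegral_const_mul']
  swap
  · simp
  refine lintegral_congr fun h => ?_
  rw [← lintegral_const_mul' _ _ (by simp)]
  refine lintegral_congr fun x => ?_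
  rw [two_ofReal, dist_self_add_right]
  congr 1
  simp only [Kk]
  rw [div_eq_mul_inv]; ring

theorem final_meas (hd : 1 ≤ d) (hs : s ∈ Set.Ioo (0:ℝ) 1) {Cds : ℝ} (hC : 0 < Cds) (hp : 2 ≤ p)
    (hρpos : ∀ x, 0 < ρ x) (hρm : Measurable ρ)
    (hw : TwoPowerWeight d ρ c C γ₀ γ) (hγ₀ : γ₀ ∈ Set.Ico (0:ℝ) d)
    (hγ : γ ∈ Set.Icc (0:ℝ) ((d:ℝ) - (p / 2) * ((d:ℝ) - 2 * s)))
    (hv : Measurable v) (hvi : Integrable (fun x => |v x| ^ p * ρ x))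
    (hV : Measurable V)
    (hVi : Integrable (fun x => |V x| ^ (p / (p - 1)) * ρ x ^ (-(p / (p - 1) - 1))))
    (hdist : IsDistFracLap d s Cds v V) :
      Integrable (fun z : Ed d × Ed d =>
        (v z.1 - v z.2) ^ 2 / dist z.1 z.2 ^ ((d:ℝ) + 2 * s)) ∧
      Cds / 2 * ∫ z : Ed d × Ed d,
          (v z.1 - v z.2) ^ 2 / dist z.1 z.2 ^ ((d:ℝ) + 2 * s)
        ≤ ∫ x : Ed d, v x * V x := by
  obtain ⟨h0, h1⟩ := step_inf hd hs hC hp hρpos hρm hw hγ₀ hγ hv hvi hV hVi hdist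
  rw [NN_prod hv] at h1
  have hG : Measurable (fun z : Ed d × Ed d =>
      (v z.1 - v z.2) ^ 2 / dist z.1 z.2 ^ ((d:ℝ) + 2 * s)) := by fun_prop
  have hG0 : ∀ z : Ed d × Ed d, 0 ≤ (v z.1 - v z.2) ^ 2 / dist z.1 z.2 ^ ((d:ℝ) + 2 * s) :=
    fun z => by positivity
  have hI : Integrable (fun z : Ed d × Ed d =>
      (v z.1 - v z.2) ^ 2 / dist z.1 z.2 ^ ((d:ℝ) + 2 * s)) := by
    refine (lintegral_ofReal_ne_top_iff_integrable hG.aestronglyMeasurable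
      (Eventually.of_forall hG0)).1 fun h => ?_
    rw [h, ENNReal.mul_top (by norm_num)] at h1
    exact ENNReal.ofReal_ne_top (top_le_iff.1 h1)
  refine ⟨hI, ?_⟩
  rw [← ofReal_integral_eq_lintegral_ofReal hI (Eventually.of_forall hG0),
    two_ofReal, ENNReal.ofReal_le_ofReal_iff h0] at h1
  have e3 : ∫ x, V x * v x = ∫ x, v x * V x := by simp only [mul_comm]
  rw [e3] at h1
  have := mul_le_mul_of_nonneg_left h1 (show 0 ≤ Cds / 4 by positivity)
  have e4 : Cds / 4 * (4 / Cds * ∫ x, v x * V x) = ∫ x, v x * V x := by field_simp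
  rw [e4] at this
  linarith

end
end FL

theorem stmt16 (d : ℕ) (hd : 1 ≤ d) (s : ℝ) (hs : s ∈ Set.Ioo (0:ℝ) 1)
    (Cds : ℝ) (hC : 0 < Cds) (p : ℝ)
    (hp : ((d:ℝ) ≤ 2 * s ∧ 2 ≤ p) ∨
          (2 * s < (d:ℝ) ∧ 2 ≤ p ∧ p ≤ 2 * d / ((d:ℝ) - 2 * s)))
    (ρ : Ed d → ℝ) (hρpos : ∀ x, 0 < ρ x) (hρm : Measurable ρ)
    (c C γ₀ γ : ℝ) (hw : TwoPowerWeight d ρ c C γ₀ γ)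
    (hγ₀ : γ₀ ∈ Set.Ico (0:ℝ) d)
    (hγ : γ ∈ Set.Icc (0:ℝ) ((d:ℝ) - (p / 2) * ((d:ℝ) - 2 * s))) :
    ∀ v V : Ed d → ℝ, MemX d s Cds p ρ v V →
      Integrable (fun z : Ed d × Ed d =>
        (v z.1 - v z.2) ^ 2 / dist z.1 z.2 ^ ((d:ℝ) + 2 * s)) ∧
      Cds / 2 * ∫ z : Ed d × Ed d,
          (v z.1 - v z.2) ^ 2 / dist z.1 z.2 ^ ((d:ℝ) + 2 * s)
        ≤ ∫ x : Ed d, v x * V x := by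
  intro v V hX
  have hp2 : 2 ≤ p := by rcases hp with h | h; exacts [h.2, h.2.1]
  obtain ⟨⟨hvm, hvi⟩, hdist, hVm, hVi⟩ := hX
  have hv : v =ᵐ[volume] hvm.mk v := hvm.ae_eq_mk
  have hV : V =ᵐ[volume] hVm.mk V := hVm.ae_eq_mk
  have hvi' : Integrable (fun x => |hvm.mk v x| ^ p * ρ x) :=
    hvi.congr (by filter_upwards [hv] with x hx; rw [hx])
  have hVi' : Integrable (fun x => |hVm.mk V x| ^ (p / (p - 1)) * ρ x ^ (-(p / (p - 1) - 1))) :=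
    hVi.congr (by filter_upwards [hV] with x hx; rw [hx])
  have hdist' : IsDistFracLap d s Cds (hvm.mk v) (hVm.mk V) := by
    intro φ h1 h2
    have h := hdist φ h1 h2
    have k1 : ∫ x, v x * fracLap d s Cds φ x = ∫ x, hvm.mk v x * fracLap d s Cds φ x :=
      integral_congr_ae (by filter_upwards [hv] with x hx; rw [hx])
    have k2 : ∫ x, V x * φ x = ∫ x, hVm.mk V x * φ x :=
      integral_congr_ae (by filter_upwards [hV] with x hx; rw [hx])
    rw [← k1, ← k2, h]
  have hfin := FL.final_meas hd hs hC hp2 hρpos hρm hw hγ₀ hγ hvm.stronglyMeasurable_mk.measurable hvi'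
    hVm.stronglyMeasurable_mk.measurable hVi' hdist'
  have hpr : (fun z : Ed d × Ed d => (v z.1 - v z.2) ^ 2 / dist z.1 z.2 ^ ((d:ℝ) + 2 * s)) =ᵐ[volume]
      (fun z : Ed d × Ed d =>
        (hvm.mk v z.1 - hvm.mk v z.2) ^ 2 / dist z.1 z.2 ^ ((d:ℝ) + 2 * s)) := by
    have q1 : ∀ᵐ z : Ed d × Ed d, v z.1 = hvm.mk v z.1 :=
      Measure.quasiMeasurePreserving_fst.ae hv
    have q2 : ∀ᵐ z : Ed d × Ed d, v z.2 = hvm.mk v z.2 :=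
      Measure.quasiMeasurePreserving_snd.ae hv
    filter_upwards [q1, q2] with z h1 h2
    rw [h1, h2]
  have hprod : ∫ x, v x * V x = ∫ x, hvm.mk v x * hVm.mk V x :=
    integral_congr_ae (by filter_upwards [hv, hV] with x hx hx2; rw [hx, hx2])
  refine ⟨hfin.1.congr hpr.symm, ?_⟩
  rw [integral_congr_ae hpr, hprod]
  exact hfin.2
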